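/- Let a be a ribbon with n nodes and signature σ = σ(a). Then every extension of a has at least 1 − σ/2 critical points in the open unit disk, and there exists an extension of a with at most n − 1 − σ/2 critical points; consequently 1 − σ/2 ≤ γ(a) ≤ n − 1 − σ/2. -/

import Mathlib

open scoped RealInnerProductSpace

noncomputable section

abbrev E2 : Type := EuclideanSpace ℝ (Fin 2)

/-- The point (cos t, sin t) on the unit circle in ℝ². -/
def sphPt (t : ℝ) : E2 := (EuclideanSpace.equiv (Fin 2) ℝ).symm ![Real.cos t, Real.sin t]

/-- A ribbon with `n` nodes, encoded via the angle parametrization `g = φ ∘ (cos, sin)`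
of a C^∞ function `φ : S¹ → ℝ` whose critical points on the circle are exactly the `n`
nondegenerate local extrema (nodes) at angles `θ 0 < θ 1 < ⋯ < θ (n-1)` in `[0, 2π)`,
with pairwise distinct critical values, together with a marking `ν` of the nodes by `±1`. -/
structure Ribbon (n : ℕ) : Type where
  g : ℝ → ℝ
  θ : Fin n → ℝ
  ν : Fin n → ℤ
  n_even : Even n
  n_pos : 0 < n
  smooth_g : ContDiff ℝ (⊤ : ℕ∞) g
  periodic_g : Function.Periodic g (2 * Real.pi)
  theta_mem : ∀ i, θ i ∈ Set.Ico (0 : ℝ) (2 * Real.pi)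
  theta_mono : StrictMono θ
  node_crit : ∀ i, deriv g (θ i) = 0
  node_nondeg : ∀ i, deriv (deriv g) (θ i) ≠ 0
  crit_only : ∀ t ∈ Set.Ico (0 : ℝ) (2 * Real.pi), deriv g t = 0 → ∃ i, t = θ i
  values_distinct : ∀ i j, g (θ i) = g (θ j) → i = j
  nu_sign : ∀ i, ν i = 1 ∨ ν i = -1

/-- The signature σ = s₊ − s₋ of a ribbon. -/
def Ribbon.sigma {n : ℕ} (a : Ribbon n) : ℤ := ∑ i, a.ν i

/-- Critical points of `f` in the open unit disk. -/
def critPts (f : E2 → ℝ) : Set E2 :=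
  {x | x ∈ Metric.ball (0 : E2) 1 ∧ fderiv ℝ f x = 0}

/-- `f : ℝ² → ℝ` is an extension of the ribbon `a`: it is C^∞, agrees with `φ` on the unit
circle, has nowhere-vanishing gradient on the circle, and at each node the radial derivative
`⟪∇f(p), p⟫` has sign `ν p` if `p` is a local maximum of `φ` (second derivative of `g`
negative there) and sign `−ν p` if `p` is a local minimum of `φ`. -/
def IsExtension {n : ℕ} (a : Ribbon n) (f : E2 → ℝ) : Prop :=
  ContDiff ℝ (⊤ : ℕ∞) f ∧
  (∀ t : ℝ, f (sphPt t) = a.g t) ∧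
  (∀ x ∈ Metric.sphere (0 : E2) 1, fderiv ℝ f x ≠ 0) ∧
  (∀ i : Fin n,
    (deriv (deriv a.g) (a.θ i) < 0 →
      0 < (a.ν i : ℝ) * ⟪gradient f (sphPt (a.θ i)), sphPt (a.θ i)⟫) ∧
    (0 < deriv (deriv a.g) (a.θ i) →
      (a.ν i : ℝ) * ⟪gradient f (sphPt (a.θ i)), sphPt (a.θ i)⟫ < 0))

/-- The ribbon invariant γ: the infimum, over all extensions `f` of `a`, of the number of
critical points of `f` in the open unit disk (a value in `ℕ∞`). -/
def gammaR {n : ℕ} (a : Ribbon n) : ℕ∞ :=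
  sInf {k : ℕ∞ | ∃ f : E2 → ℝ, IsExtension a f ∧ (critPts f).encard = k}

/-!
Lower bound. At a negative local maximum of `φ` an extension `f` increases into the disk, so such
a node is a pass of `f`: the circle descends from it on both sides, while `f` is larger just
inside. Raise the level past one of these nodes. If the two sides of the pass are already
connected below it, a low path joining them encircles a local maximum of `f`; otherwise the pass
merges two components of the sublevel set, each of which carries a local minimum of `f` on the
closed disk. A local minimum on the closed disk is a critical point or a positive local minimum of
`φ`, hence the number of negative maxima plus one is at most the number of positive minima plus
the number of critical points. Since maxima and minima alternate, positive minima minus negative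
maxima is `σ / 2`.

Upper bound. The cone over `φ` with apex at height `c` has the origin as its only critical point,
but at some nodes its radial derivative has the wrong sign; a correction there creates exactly one
critical point on the ray towards each of these nodes. If some node is negative, `c` is put above
or below all values; if `n > 2`, just below the lowest maximum. In the remaining case of two
positive nodes, interpolating `φ` along parallel chords gives an extension without critical
points.
-/

/-! ### The plane as `ℂ` -/

/-- The standard isometry `(x, y) ↦ x + i y`, through which arguments, rotations and the complex
exponential are available on `E2`. -/
def toComplex : E2 ≃ₗᵢ[ℝ] ℂ := Complex.orthonormalBasisOneI.repr.symm

lemma toComplex_apply (x : E2) : toComplex x = x 0 + x 1 * Complex.I := by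
  simp [toComplex, Complex.orthonormalBasisOneI]

lemma sphPt_zero (t : ℝ) : sphPt t 0 = Real.cos t := by simp [sphPt]

lemma sphPt_one (t : ℝ) : sphPt t 1 = Real.sin t := by simp [sphPt]

lemma toComplex_sphPt (t : ℝ) : toComplex (sphPt t) = Complex.exp (t * Complex.I) := by
  rw [toComplex_apply, sphPt_zero, sphPt_one, Complex.exp_mul_I, Complex.ofReal_cos,
    Complex.ofReal_sin]

lemma norm_sphPt (t : ℝ) : ‖sphPt t‖ = 1 := by
  rw [← toComplex.norm_map, toComplex_sphPt, Complex.norm_exp_ofReal_mul_I]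

lemma sphPt_mem_closedBall (t : ℝ) : sphPt t ∈ Metric.closedBall (0 : E2) 1 := by
  simp [norm_sphPt]

lemma sphPt_ne_zero (t : ℝ) : sphPt t ≠ 0 := by
  simp [← norm_ne_zero_iff, norm_sphPt]

lemma sphPt_periodic : Function.Periodic sphPt (2 * Real.pi) := fun t ↦ by
  simp [sphPt]

lemma norm_smul_sphPt_arg (x : E2) : ‖x‖ • sphPt (toComplex x).arg = x :=
  toComplex.injective <| by
    rw [map_smul, toComplex_sphPt, Complex.real_smul, ← toComplex.norm_map,
      Complex.norm_mul_exp_arg_mul_I]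

lemma sphPt_arg {x : E2} (hx : ‖x‖ = 1) : sphPt (toComplex x).arg = x := by
  simpa [hx] using norm_smul_sphPt_arg x

lemma contDiff_sphPt : ContDiff ℝ (⊤ : ℕ∞) sphPt :=
  (EuclideanSpace.equiv (Fin 2) ℝ).symm.contDiff.comp <| contDiff_pi.2 fun i ↦ by
    fin_cases i
    · exact Real.contDiff_cos
    · exact Real.contDiff_sin

lemma continuous_sphPt : Continuous sphPt := contDiff_sphPt.continuous

lemma hasDerivAt_sphPt (t : ℝ) : HasDerivAt sphPt (sphPt (t + Real.pi / 2)) t := by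
  have hcoord : HasDerivAt (fun s : ℝ ↦ ![Real.cos s, Real.sin s])
      ![Real.cos (t + Real.pi / 2), Real.sin (t + Real.pi / 2)] t := hasDerivAt_pi.2 fun i ↦ by
    fin_cases i
    · simpa [Real.cos_add_pi_div_two] using Real.hasDerivAt_cos t
    · simpa [Real.sin_add_pi_div_two] using Real.hasDerivAt_sin t
  exact (EuclideanSpace.equiv (Fin 2) ℝ).symm.hasFDerivAt.comp_hasDerivAt t hcoord

lemma inner_gradient (f : E2 → ℝ) (x v : E2) : ⟪gradient f x, v⟫ = fderiv ℝ f x v := by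
  rw [gradient, InnerProductSpace.toDual_symm_apply]

/-- Rotation of the plane by the angle `μ`. -/
def rotate (μ : ℝ) : E2 ≃ₗᵢ[ℝ] E2 :=
  toComplex.trans ((rotation (Circle.exp μ)).trans toComplex.symm)

lemma toComplex_rotate (μ : ℝ) (x : E2) :
    toComplex (rotate μ x) = Complex.exp (μ * Complex.I) * toComplex x := by
  simp [rotate]

lemma rotate_sphPt (μ t : ℝ) : rotate μ (sphPt t) = sphPt (t + μ) :=
  toComplex.injective <| by
    rw [toComplex_rotate, toComplex_sphPt, toComplex_sphPt, ← Complex.exp_add, ← add_mul,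
      Complex.ofReal_add, add_comm]

/-! ### Paths in the disk with interlaced endpoints cross -/

lemma one_sub_mem_slitPlane {z : ℂ} (hz : ‖z‖ ≤ 1) (hz1 : z ≠ 1) : 1 - z ∈ Complex.slitPlane := by
  refine Complex.mem_slitPlane_iff.2 <| Or.inl ?_
  rw [Complex.sub_re, Complex.one_re, sub_pos]
  refine ((Complex.re_le_norm z).trans hz).lt_of_ne fun hre ↦ hz1 ?_
  have hsq : z.re * z.re + z.im * z.im ≤ 1 := by
    rw [← Complex.normSq_apply, ← Complex.sq_norm]
    exact pow_le_one₀ (norm_nonneg z) hz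
  have him : z.im = 0 := by nlinarith
  exact Complex.ext (by simp [hre]) (by simp [him])

lemma arg_one_sub_exp {θ : ℝ} (hθ : θ ∈ Set.Ioo 0 (2 * Real.pi)) :
    (1 - Complex.exp (θ * Complex.I)).arg = θ / 2 - Real.pi / 2 := by
  obtain ⟨h0, h1⟩ := hθ
  have hsin : 0 < 2 * Real.sin (θ / 2) :=
    mul_pos two_pos <| Real.sin_pos_of_pos_of_lt_pi (by linarith) (by linarith)
  have hpolar : 1 - Complex.exp (θ * Complex.I) = (2 * Real.sin (θ / 2) : ℝ) *
      (Complex.cos (θ / 2 - Real.pi / 2 : ℝ) +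
        Complex.sin (θ / 2 - Real.pi / 2 : ℝ) * Complex.I) := by
    have hθ2 : (θ : ℂ) = 2 * (θ / 2 : ℂ) := by ring
    rw [hθ2, Complex.exp_mul_I, Complex.cos_two_mul', Complex.sin_two_mul]
    push_cast
    rw [Complex.cos_sub_pi_div_two, Complex.sin_sub_pi_div_two]
    linear_combination -Complex.sin_sq_add_cos_sq (θ / 2 : ℂ)
  rw [hpolar, Complex.arg_mul_cos_add_sin_mul_I hsin]
  constructor <;> linarith

-- The inscribed angle theorem: seen from a point of the circle, the arc from `x` to `y` spans the
-- angle `(y - x) / 2`. A path in the disk between its endpoints turns by that same angle because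
-- it stays on one side of the tangent line.
lemma im_sub_im_eq_half_sub {A : Type*} [TopologicalSpace A] [PreconnectedSpace A] {w : A → E2}
    {L : A → ℂ} (hw : Continuous w) (hL : Continuous L) (hw_le : ∀ t, w t ∈ Metric.closedBall 0 1)
    {p : E2} (hexp : ∀ t, Complex.exp (L t) = toComplex p - toComplex (w t))
    {ω x y : ℝ} {s t : A} (hp : p = sphPt ω) (hs : w s = sphPt x) (ht : w t = sphPt y)
    (hx : x ∈ Set.Ioo ω (ω + 2 * Real.pi)) (hy : y ∈ Set.Ioo ω (ω + 2 * Real.pi)) :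
    (L t).im - (L s).im = (y - x) / 2 := by
  set v : A → ℂ := fun t ↦ toComplex (rotate (-ω) (w t)) with hv_def
  have hfactor (t : A) : toComplex p * (1 - v t) = toComplex p - toComplex (w t) := by
    simp only [hv_def, hp, toComplex_rotate, toComplex_sphPt, mul_one_sub, ← mul_assoc,
      ← Complex.exp_add]
    simp
  have hslit (t : A) : 1 - v t ∈ Complex.slitPlane := by
    refine one_sub_mem_slitPlane ?_ fun hv ↦ Complex.exp_ne_zero (L t) ?_
    · simpa [hv_def] using hw_le t
    · rw [hexp, ← hfactor, hv, sub_self, mul_zero]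
  have hconst : L t - Complex.log (1 - v t) = L s - Complex.log (1 - v s) := by
    have hcont : Continuous fun t ↦ L t - Complex.log (1 - v t) :=
      hL.sub <| Continuous.clog (by fun_prop) hslit
    refine Complex.isCoveringMap_exp.const_of_comp hcont (fun t t' ↦ ?_) t s
    have hval (t : A) : Complex.exp (L t - Complex.log (1 - v t)) = toComplex p := by
      rw [Complex.exp_sub, Complex.exp_log (Complex.slitPlane_ne_zero (hslit t)), hexp, ← hfactor,
        mul_div_cancel_right₀ _ (Complex.slitPlane_ne_zero (hslit t))]
    rw [Subtype.mk.injEq, hval, hval]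
  have harg {t : A} {z : ℝ} (ht : w t = sphPt z) (hz : z ∈ Set.Ioo ω (ω + 2 * Real.pi)) :
      (Complex.log (1 - v t)).im = (z - ω) / 2 - Real.pi / 2 := by
    simp only [hv_def, ht, rotate_sphPt, toComplex_sphPt, ← sub_eq_add_neg]
    rw [Complex.log_im, arg_one_sub_exp ⟨by linarith [hz.1], by linarith [hz.2]⟩]
  have him := congrArg Complex.im hconst
  rw [Complex.sub_im, Complex.sub_im, harg hs hx, harg ht hy] at him
  linarith

lemma exists_continuous_exp_eq {X : Type*} [TopologicalSpace X] [SimplyConnectedSpace X]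
    [LocallyPathConnectedSpace X] {u : X → ℂ} (hu : Continuous u) (hu0 : ∀ x, u x ≠ 0) :
    ∃ L : X → ℂ, Continuous L ∧ ∀ x, Complex.exp (L x) = u x := by
  obtain ⟨x₀⟩ : Nonempty X := inferInstance
  obtain ⟨L, ⟨-, hL⟩, -⟩ := Complex.isCoveringMap_exp.existsUnique_continuousMap_lifts
    ⟨fun x ↦ (⟨u x, hu0 x⟩ : {z : ℂ // z ≠ 0}), by fun_prop⟩ x₀ (Complex.log (u x₀))
    (Subtype.ext <| Complex.exp_log (hu0 x₀))
  exact ⟨L, L.continuous, fun x ↦ congrArg Subtype.val (congrFun hL x)⟩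

-- As a point runs along each path in turn, the chord joining the two paths turns by four inscribed
-- angles, and the total rotation around the square of parameters fails to vanish.
lemma nonempty_inter_of_joinedIn {a b c d : ℝ} (hab : a < b) (hbc : b < c) (hcd : c < d)
    (hda : d < a + 2 * Real.pi) {S T : Set E2} (hS : S ⊆ Metric.closedBall 0 1)
    (hT : T ⊆ Metric.closedBall 0 1) (hbd : JoinedIn S (sphPt b) (sphPt d))
    (hac : JoinedIn T (sphPt a) (sphPt c)) : (S ∩ T).Nonempty := by
  obtain ⟨γ, hγ⟩ := hbd
  obtain ⟨η, hη⟩ := hac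
  by_contra hST
  have hne (p : unitInterval × unitInterval) : toComplex (γ p.1) - toComplex (η p.2) ≠ 0 :=
    sub_ne_zero.2 fun h ↦ hST ⟨γ p.1, hγ _, toComplex.injective h ▸ hη _⟩
  obtain ⟨L, hL, hexp⟩ : ∃ L : unitInterval × unitInterval → ℂ, Continuous L ∧
      ∀ p, Complex.exp (L p) = toComplex (γ p.1) - toComplex (η p.2) := by
    obtain ⟨L, hL, hexp⟩ := exists_continuous_exp_eq (X := ℝ × ℝ)
      (u := fun p ↦ toComplex (γ.extend p.1) - toComplex (η.extend p.2)) (by fun_prop)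
      fun p ↦ hne (Set.projIcc 0 1 zero_le_one p.1, Set.projIcc 0 1 zero_le_one p.2)
    exact ⟨fun p ↦ L (p.1, p.2), by fun_prop, fun p ↦ by simp [hexp]⟩
  have hexp_neg (p : unitInterval × unitInterval) :
      Complex.exp (L p + Real.pi * Complex.I) = toComplex (η p.2) - toComplex (γ p.1) := by
    rw [Complex.exp_add, hexp, Complex.exp_pi_mul_I]
    ring
  have from_b := im_sub_im_eq_half_sub (L := fun t ↦ L (0, t)) (p := γ 0) η.continuous
    (by fun_prop) (fun t ↦ hT (hη t)) (fun t ↦ hexp (0, t)) γ.source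
    (η.source.trans (sphPt_periodic a).symm) η.target
    ⟨by linarith, by linarith⟩ ⟨by linarith, by linarith⟩
  have from_d := im_sub_im_eq_half_sub (L := fun t ↦ L (1, t)) (p := γ 1) η.continuous
    (by fun_prop) (fun t ↦ hT (hη t)) (fun t ↦ hexp (1, t))
    (γ.target.trans (sphPt_periodic.sub_eq d).symm)
    η.source η.target ⟨by linarith, by linarith⟩ ⟨by linarith, by linarith⟩
  have from_a := im_sub_im_eq_half_sub (L := fun s ↦ L (s, 0) + Real.pi * Complex.I)
    (p := η 0) γ.continuous (by fun_prop) (fun s ↦ hS (hγ s)) (fun s ↦ hexp_neg (s, 0)) η.source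
    γ.source γ.target ⟨by linarith, by linarith⟩ ⟨by linarith, by linarith⟩
  have from_c := im_sub_im_eq_half_sub (L := fun s ↦ L (s, 1) + Real.pi * Complex.I)
    (p := η 1) γ.continuous (by fun_prop) (fun s ↦ hS (hγ s)) (fun s ↦ hexp_neg (s, 1))
    (η.target.trans (sphPt_periodic.sub_eq c).symm) γ.source
    (γ.target.trans (sphPt_periodic.sub_eq d).symm)
    ⟨by linarith, by linarith⟩ ⟨by linarith, by linarith⟩
  simp only [Complex.add_im] at from_a from_c
  linarith [Real.pi_pos]

/-! ### Counting extrema by passes -/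

-- Contracting the lowest merge identifies two elements of `M` and uses up one element of `P`.
lemma card_add_one_le_card_of_merge {ι X α : Type*} [LinearOrder α] {r : α → X → X → Prop}
    (hsymm : ∀ t x y, r t x y → r t y x) (htrans : ∀ t x y z, r t x y → r t y z → r t x z)
    {τ : ι → α} {P : Finset ι} {M : Finset X} {a b : ι → X} (hM : M.Nonempty)
    (hτ : Set.InjOn τ P) (ha : ∀ p ∈ P, a p ∈ M) (hb : ∀ p ∈ P, b p ∈ M)
    (hrefl : ∀ p ∈ P, r (τ p) (a p) (a p)) (hsep : ∀ p ∈ P, ¬ r (τ p) (a p) (b p))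
    (hmerge : ∀ p ∈ P, ∀ t, τ p < t → r t (a p) (b p)) : P.card + 1 ≤ M.card := by
  classical
  induction P using Finset.induction_on_min_value τ generalizing M a b with
  | empty => simpa using hM.card_pos
  | insert p P hpP hmin ih =>
    have hlt (q) (hq : q ∈ P) : τ p < τ q := (hmin q hq).lt_of_ne fun h ↦
      hpP <| hτ (by simp) (by simp [hq]) h ▸ hq
    set c : X → X := fun x ↦ if x = b p then a p else x with hc
    have hne : a p ≠ b p := fun h ↦ hsep p (by simp) <| h ▸ hrefl p (by simp)
    have hc_mem {x} (hx : x ∈ M) : c x ∈ M.erase (b p) := by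
      by_cases hxb : x = b p
      · simpa [hc, hxb, hne] using ha p (by simp)
      · simpa [hc, hxb] using hx
    have hc_left {t x y} (ht : τ p < t) : r t (c x) y ↔ r t x y := by
      have hab := hmerge p (by simp) t ht
      by_cases hxb : x = b p
      · rw [hc, hxb]
        simpa using ⟨htrans _ _ _ _ (hsymm _ _ _ hab), htrans _ _ _ _ hab⟩
      · simp [hc, hxb]
    have hcomm {t x y} : r t x y ↔ r t y x := ⟨hsymm t x y, hsymm t y x⟩
    have hc_iff {t x y} (ht : τ p < t) : r t (c x) (c y) ↔ r t x y := by
      rw [hc_left ht, hcomm, hc_left ht, hcomm]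
    have hcard := ih (M := M.erase (b p)) (a := c ∘ a) (b := c ∘ b) ⟨_, hc_mem (ha p (by simp))⟩
      (hτ.mono (by simp)) (fun q hq ↦ hc_mem (ha q (by simp [hq])))
      (fun q hq ↦ hc_mem (hb q (by simp [hq])))
      (fun q hq ↦ (hc_iff (hlt q hq)).2 (hrefl q (by simp [hq])))
      (fun q hq ↦ (hc_iff (hlt q hq)).not.2 (hsep q (by simp [hq])))
      (fun q hq t ht ↦ (hc_iff ((hlt q hq).trans ht)).2 (hmerge q (by simp [hq]) t ht))
    rw [Finset.card_insert_of_notMem hpP, ← Finset.card_erase_add_one (hb p (by simp))]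
    omega

lemma joinedIn_sublevel_mono {E : Type*} [TopologicalSpace E] {D : Set E} {f : E → ℝ} {s t : ℝ}
    (hst : s ≤ t) {y z : E} (h : JoinedIn (D ∩ f ⁻¹' Set.Iio s) y z) :
    JoinedIn (D ∩ f ⁻¹' Set.Iio t) y z :=
  h.mono <| Set.inter_subset_inter_right _ <| Set.preimage_mono <| Set.Iio_subset_Iio hst

/-- A pass of `f` over the boundary point `p` of `D`: the boundary descends from `p` on both sides,
towards `l` and `r`, while `f` increases towards `x` in the interior of `D`. If `l` and `r` are
joined below `p`, they enclose the part of `D` reached from `x` above `p`. -/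
structure IsPass {E : Type*} [TopologicalSpace E] (D : Set E) (f : E → ℝ) (p l r x : E) : Prop where
  notMem_interior : p ∉ interior D
  left_mem : l ∈ D ∩ f ⁻¹' Set.Iio (f p)
  right_mem : r ∈ D ∩ f ⁻¹' Set.Iio (f p)
  inner_mem : x ∈ D ∩ f ⁻¹' Set.Ioi (f p)
  around : ∀ t, f p < t → JoinedIn (D ∩ f ⁻¹' Set.Iio t) l r
  inward : ∀ t < f p, JoinedIn (D ∩ f ⁻¹' Set.Ioi t) p x
  separates : JoinedIn (D ∩ f ⁻¹' Set.Iio (f p)) l r →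
    ∀ q, JoinedIn (D ∩ f ⁻¹' Set.Ioi (f p)) x q → q ∈ interior D

section Passes

variable {E : Type*} [AddCommGroup E] [Module ℝ E] [TopologicalSpace E] [IsTopologicalAddGroup E]
  [ContinuousSMul ℝ E] [LocallyConvexSpace ℝ E] {D : Set E} {f : E → ℝ}

lemma eventually_joinedIn_sublevel (hD : Convex ℝ D) (hf : ContinuousOn f D) {x : E} {t : ℝ}
    (hx : x ∈ D) (hxt : f x < t) : ∀ᶠ y in nhdsWithin x D, JoinedIn (D ∩ f ⁻¹' Set.Iio t) x y := by
  obtain ⟨u, hu, huD⟩ := mem_nhdsWithin_iff_exists_mem_nhds_inter.1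
    ((hf x hx).eventually_lt_const hxt)
  obtain ⟨v, ⟨hv, hv_conv⟩, hvu⟩ := (LocallyConvexSpace.convex_basis (𝕜 := ℝ) x).mem_iff.1 hu
  filter_upwards [mem_nhdsWithin_of_mem_nhds hv, self_mem_nhdsWithin] with y hyv hyD
  refine JoinedIn.of_segment_subset fun z hz ↦ ?_
  have hzD := hD.segment_subset hx hyD hz
  exact ⟨hzD, huD ⟨hvu <| hv_conv.segment_subset (mem_of_mem_nhds hv) hyv hz, hzD⟩⟩

lemma exists_joinedIn_isLocalMinOn [T2Space E] (hD : Convex ℝ D) (hDc : IsCompact D)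
    (hf : ContinuousOn f D) {x : E} {t : ℝ} (hx : x ∈ D ∩ f ⁻¹' Set.Iio t) :
    ∃ m, JoinedIn (D ∩ f ⁻¹' Set.Iio t) x m ∧ IsLocalMinOn f D m := by
  set C := {y | JoinedIn (D ∩ f ⁻¹' Set.Iio t) x y}
  have hCD : closure C ⊆ D := closure_minimal (fun y hy ↦ hy.target_mem.1) hDc.isClosed
  have hxC : x ∈ C := JoinedIn.refl hx
  obtain ⟨m, hm, hmin⟩ := (hDc.of_isClosed_subset isClosed_closure hCD).exists_isMinOn
    ⟨x, subset_closure hxC⟩ (hf.mono hCD)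
  have hnear := eventually_joinedIn_sublevel hD hf (hCD hm)
    ((hmin (subset_closure hxC)).trans_lt hx.2)
  have hmC : m ∈ C := by
    obtain ⟨y, hy, hyC⟩ := ((mem_closure_iff_frequently.1 hm).and_eventually
      (eventually_nhdsWithin_iff.1 hnear)).exists
    exact hy.trans (hyC hy.target_mem.1).symm
  exact ⟨m, hmC, hnear.mono fun z hz ↦ hmin <| subset_closure <| hmC.trans hz⟩

lemma exists_joinedIn_isLocalMaxOn [T2Space E] (hD : Convex ℝ D) (hDc : IsCompact D)
    (hf : ContinuousOn f D) {x : E} {t : ℝ} (hx : x ∈ D ∩ f ⁻¹' Set.Ioi t) :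
    ∃ m, JoinedIn (D ∩ f ⁻¹' Set.Ioi t) x m ∧ IsLocalMaxOn f D m := by
  have hneg : (fun y ↦ -f y) ⁻¹' Set.Iio (-t) = f ⁻¹' Set.Ioi t := by ext; simp
  rw [← hneg] at hx ⊢
  obtain ⟨m, hxm, hm⟩ := exists_joinedIn_isLocalMinOn hD hDc hf.neg hx
  exact ⟨m, hxm, by simpa using hm.neg⟩

variable {ι : Type*} {P : Finset ι} {p l r x : ι → E}

lemma card_le_ncard_isLocalMax_of_isPass [T2Space E] (hD : Convex ℝ D) (hDc : IsCompact D)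
    (hf : ContinuousOn f D) (hpass : ∀ i ∈ P, IsPass D f (p i) (l i) (r i) (x i))
    (hinj : Set.InjOn (fun i ↦ f (p i)) P)
    (hloop : ∀ i ∈ P, JoinedIn (D ∩ f ⁻¹' Set.Iio (f (p i))) (l i) (r i))
    (hmax : {x ∈ interior D | IsLocalMax f x}.Finite) :
    P.card ≤ {x ∈ interior D | IsLocalMax f x}.ncard := by
  have hpeak (i) (hi : i ∈ P) : ∃ y, JoinedIn (D ∩ f ⁻¹' Set.Ioi (f (p i))) (x i) y ∧
      y ∈ {x ∈ interior D | IsLocalMax f x} := by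
    obtain ⟨y, hxy, hy⟩ := exists_joinedIn_isLocalMaxOn hD hDc hf (hpass i hi).inner_mem
    have hyD := (hpass i hi).separates (hloop i hi) y hxy
    exact ⟨y, hxy, hyD, hy.isLocalMax (mem_interior_iff_mem_nhds.1 hyD)⟩
  choose! y hxy hy using hpeak
  have hne {i j} (hi : i ∈ P) (hj : j ∈ P) (hij : f (p i) < f (p j)) : y i ≠ y j := fun h ↦ by
    refine (hpass j hj).notMem_interior <| (hpass i hi).separates (hloop i hi) _ ?_
    have hyx : JoinedIn (D ∩ f ⁻¹' Set.Ioi (f (p i))) (y j) (x j) := (hxy j hj).symm.mono <|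
      Set.inter_subset_inter_right _ <| Set.preimage_mono <| Set.Ioi_subset_Ioi hij.le
    exact (h ▸ hxy i hi).trans <| hyx.trans <| ((hpass j hj).inward _ hij).symm
  rw [← Set.ncard_coe_finset]
  refine Set.ncard_le_ncard_of_injOn y hy (fun i hi j hj hij ↦ hinj hi hj ?_) hmax
  exact le_antisymm (not_lt.1 fun h ↦ hne hj hi h hij.symm) (not_lt.1 fun h ↦ hne hi hj h hij)

lemma card_add_one_le_ncard_isLocalMinOn_of_isPass [T2Space E] (hD : Convex ℝ D)
    (hDc : IsCompact D) (hDne : D.Nonempty) (hf : ContinuousOn f D)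
    (hpass : ∀ i ∈ P, IsPass D f (p i) (l i) (r i) (x i))
    (hinj : Set.InjOn (fun i ↦ f (p i)) P)
    (hmerge : ∀ i ∈ P, ¬ JoinedIn (D ∩ f ⁻¹' Set.Iio (f (p i))) (l i) (r i))
    (hmin : {x ∈ D | IsLocalMinOn f D x}.Finite) :
    P.card + 1 ≤ {x ∈ D | IsLocalMinOn f D x}.ncard := by
  have hl (i) (hi : i ∈ P) := exists_joinedIn_isLocalMinOn hD hDc hf (hpass i hi).left_mem
  have hr (i) (hi : i ∈ P) := exists_joinedIn_isLocalMinOn hD hDc hf (hpass i hi).right_mem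
  choose! a hla ha using hl
  choose! b hrb hb using hr
  obtain ⟨m, hmD, hm⟩ := hDc.exists_isMinOn hDne hf
  rw [Set.ncard_eq_toFinset_card _ hmin]
  refine card_add_one_le_card_of_merge (r := fun t y z ↦ JoinedIn (D ∩ f ⁻¹' Set.Iio t) y z)
    (τ := fun i ↦ f (p i)) (a := a) (b := b) (fun _ _ _ h ↦ h.symm) (fun _ _ _ _ h h' ↦ h.trans h')
    ⟨m, by simpa using ⟨hmD, hm.localize⟩⟩ hinj ?_ ?_ ?_ ?_ ?_
  · exact fun i hi ↦ by simpa using ⟨(hla i hi).target_mem.1, ha i hi⟩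
  · exact fun i hi ↦ by simpa using ⟨(hrb i hi).target_mem.1, hb i hi⟩
  · exact fun i hi ↦ JoinedIn.refl (hla i hi).target_mem
  · exact fun i hi hab ↦ hmerge i hi <| (hla i hi).trans <| hab.trans (hrb i hi).symm
  · exact fun i hi t ht ↦ (joinedIn_sublevel_mono ht.le (hla i hi).symm).trans <|
      ((hpass i hi).around t ht).trans <| joinedIn_sublevel_mono ht.le (hrb i hi)

theorem card_add_one_le_ncard_add_ncard_of_isPass [T2Space E] (hD : Convex ℝ D)
    (hDc : IsCompact D) (hDne : D.Nonempty) (hf : ContinuousOn f D)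
    (hpass : ∀ i ∈ P, IsPass D f (p i) (l i) (r i) (x i))
    (hinj : Set.InjOn (fun i ↦ f (p i)) P) (hmin : {x ∈ D | IsLocalMinOn f D x}.Finite)
    (hmax : {x ∈ interior D | IsLocalMax f x}.Finite) :
    P.card + 1 ≤ {x ∈ D | IsLocalMinOn f D x}.ncard + {x ∈ interior D | IsLocalMax f x}.ncard := by
  classical
  set loop : ι → Prop := fun i ↦ JoinedIn (D ∩ f ⁻¹' Set.Iio (f (p i))) (l i) (r i)
  have hloops := card_le_ncard_isLocalMax_of_isPass (P := P.filter loop) hD hDc hf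
    (fun i hi ↦ hpass i (Finset.mem_of_mem_filter i hi))
    (hinj.mono <| Finset.coe_subset.2 <| Finset.filter_subset _ P)
    (fun i hi ↦ (Finset.mem_filter.1 hi).2) hmax
  have hmerges := card_add_one_le_ncard_isLocalMinOn_of_isPass (P := P.filter (¬ loop ·)) hD hDc
    hDne hf (fun i hi ↦ hpass i (Finset.mem_of_mem_filter i hi))
    (hinj.mono <| Finset.coe_subset.2 <| Finset.filter_subset _ P)
    (fun i hi ↦ (Finset.mem_filter.1 hi).2) hmin
  have hsplit := Finset.card_filter_add_card_filter_not (s := P) loop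
  omega

end Passes

/-! ### Passes over boundary points of the disk -/

lemma joinedIn_of_mapsTo_Icc {X : Type*} [TopologicalSpace X] {u : ℝ → X} {a b : ℝ} {S : Set X}
    (hab : a ≤ b) (hu : ContinuousOn u (Set.Icc a b)) (hS : Set.MapsTo u (Set.Icc a b) S) :
    JoinedIn S (u a) (u b) :=
  ((((convex_Icc a b).isPathConnected ⟨a, Set.left_mem_Icc.2 hab⟩).image' hu).joinedIn _
    ⟨a, Set.left_mem_Icc.2 hab, rfl⟩ _ ⟨b, Set.right_mem_Icc.2 hab, rfl⟩).mono hS.image_subset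

lemma exists_sphPt_eq_of_mem_Ico {q : E2} (hq : ‖q‖ = 1) (a : ℝ) :
    ∃ t ∈ Set.Ico a (a + 2 * Real.pi), sphPt t = q :=
  ⟨toIcoMod Real.two_pi_pos a (toComplex q).arg, toIcoMod_mem_Ico _ _ _,
    (sphPt_periodic.sub_zsmul_eq _).trans (sphPt_arg hq)⟩

lemma mem_interior_closedBall_of_joinedIn {f : E2 → ℝ} {θ δ : ℝ} (hδ : 0 < δ)
    (harc : ∀ t ∈ Set.Icc (θ - δ) (θ + δ), f (sphPt t) ≤ f (sphPt θ))
    (hloop : JoinedIn (Metric.closedBall 0 1 ∩ f ⁻¹' Set.Iio (f (sphPt θ)))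
      (sphPt (θ - δ)) (sphPt (θ + δ)))
    {q : E2} (hq : JoinedIn (Metric.closedBall 0 1 ∩ f ⁻¹' Set.Ici (f (sphPt θ))) (sphPt θ) q)
    (hfq : f (sphPt θ) < f q) : q ∈ interior (Metric.closedBall (0 : E2) 1) := by
  rw [interior_closedBall _ one_ne_zero, mem_ball_zero_iff]
  refine (mem_closedBall_zero_iff.1 hq.target_mem.1).lt_of_ne fun hq1 ↦ ?_
  obtain ⟨τ, ⟨hτ_ge, hτ_lt⟩, rfl⟩ := exists_sphPt_eq_of_mem_Ico hq1 (θ - δ)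
  rcases le_or_gt τ (θ + δ) with hτ | hτ
  · exact (harc τ ⟨hτ_ge, hτ⟩).not_gt hfq
  · obtain ⟨z, ⟨-, hz_ge⟩, -, hz_lt⟩ := nonempty_inter_of_joinedIn (by linarith) (by linarith) hτ
      hτ_lt Set.inter_subset_left Set.inter_subset_left hq hloop
    exact lt_irrefl (f z) (lt_of_lt_of_le hz_lt hz_ge)

lemma one_sub_smul_sphPt_mem_closedBall (θ : ℝ) {s : ℝ} (hs : s ∈ Set.Icc (0 : ℝ) 1) :
    (1 - s) • sphPt θ ∈ Metric.closedBall (0 : E2) 1 := by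
  rw [mem_closedBall_zero_iff, norm_smul, norm_sphPt, mul_one, Real.norm_of_nonneg] <;>
    linarith [hs.1, hs.2]

theorem exists_isPass_sphPt {f : E2 → ℝ} {θ : ℝ}
    (harc : ∀ᶠ t in nhdsWithin θ {θ}ᶜ, f (sphPt t) < f (sphPt θ))
    (hrad : ∀ᶠ s in nhdsWithin (0 : ℝ) (Set.Ioi 0), f (sphPt θ) < f ((1 - s) • sphPt θ)) :
    ∃ l r x, IsPass (Metric.closedBall 0 1) f (sphPt θ) l r x := by
  set D := Metric.closedBall (0 : E2) 1
  obtain ⟨ε, hε, hsub⟩ := Metric.nhds_basis_closedBall.eventually_iff.1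
    (eventually_nhdsWithin_iff.1 harc)
  obtain ⟨σ, hσ, hσ1, hrad⟩ : ∃ σ : ℝ, 0 < σ ∧ σ ≤ 1 ∧
      ∀ s ∈ Set.Ioc 0 σ, f (sphPt θ) < f ((1 - s) • sphPt θ) := by
    obtain ⟨σ, hσ, hsub⟩ := mem_nhdsGT_iff_exists_Ioc_subset.1 hrad
    exact ⟨min σ 1, lt_min hσ one_pos, min_le_right _ _, fun s hs ↦
      hsub ⟨hs.1, hs.2.trans (min_le_left _ _)⟩⟩
  have harc_lt (t) (ht : t ∈ Set.Icc (θ - ε) (θ + ε)) (hne : t ≠ θ) : f (sphPt t) < f (sphPt θ) :=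
    hsub (Real.closedBall_eq_Icc ▸ ht) hne
  have harc_le (t) (ht : t ∈ Set.Icc (θ - ε) (θ + ε)) : f (sphPt t) ≤ f (sphPt θ) := by
    rcases eq_or_ne t θ with rfl | hne
    exacts [le_rfl, (harc_lt t ht hne).le]
  have harc_join (t) (ht : f (sphPt θ) < t) :
      JoinedIn (D ∩ f ⁻¹' Set.Iio t) (sphPt (θ - ε)) (sphPt (θ + ε)) :=
    joinedIn_of_mapsTo_Icc (by linarith) continuous_sphPt.continuousOn fun s hs ↦
      ⟨sphPt_mem_closedBall s, (harc_le s hs).trans_lt ht⟩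
  have hrad_join : JoinedIn (D ∩ f ⁻¹' Set.Ici (f (sphPt θ))) (sphPt θ) ((1 - σ) • sphPt θ) := by
    have hmaps : Set.MapsTo (fun s : ℝ ↦ (1 - s) • sphPt θ) (Set.Icc 0 σ)
        (D ∩ f ⁻¹' Set.Ici (f (sphPt θ))) := fun s hs ↦
      ⟨one_sub_smul_sphPt_mem_closedBall θ ⟨hs.1, hs.2.trans hσ1⟩, by
        rcases hs.1.eq_or_lt with rfl | hs0
        exacts [by simp, (hrad s ⟨hs0, hs.2⟩).le]⟩
    simpa using joinedIn_of_mapsTo_Icc hσ.le (by fun_prop) hmaps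
  refine ⟨sphPt (θ - ε), sphPt (θ + ε), (1 - σ) • sphPt θ, ?_, ⟨sphPt_mem_closedBall _, ?_⟩,
    ⟨sphPt_mem_closedBall _, ?_⟩, ⟨hrad_join.target_mem.1, hrad σ ⟨hσ, le_rfl⟩⟩, harc_join,
    fun t ht ↦ hrad_join.mono ?_, fun hloop q hq ↦ ?_⟩
  · simp [D, interior_closedBall _ one_ne_zero, norm_sphPt]
  · exact harc_lt _ ⟨le_rfl, by linarith⟩ (by linarith)
  · exact harc_lt _ ⟨by linarith, le_rfl⟩ (by linarith)
  · exact Set.inter_subset_inter_right _ <| Set.preimage_mono <| Set.Ici_subset_Ioi.2 ht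
  · exact mem_interior_closedBall_of_joinedIn hε harc_le hloop
      (hrad_join.trans <| hq.mono <| Set.inter_subset_inter_right _ <| Set.preimage_mono
        Set.Ioi_subset_Ici_self) hq.target_mem.2

/-! ### The lower bound -/

lemma eventually_lt_of_deriv_deriv_neg {f : ℝ → ℝ} (hf : Differentiable ℝ f) {x₀ : ℝ}
    (hd : deriv f x₀ = 0) (hdd : deriv (deriv f) x₀ < 0) :
    ∀ᶠ x in nhdsWithin x₀ {x₀}ᶜ, f x < f x₀ := by
  -- A quarter of the second derivative can be spared to make the local maximum strict.
  set ε := -deriv (deriv f) x₀ / 4 with hε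
  have hh (x : ℝ) : HasDerivAt (fun x ↦ f x + ε * (x - x₀) ^ 2)
      (deriv f x + ε * (2 * (x - x₀))) x := by
    simpa using (hf x).hasDerivAt.fun_add
      ((((hasDerivAt_id x).sub_const x₀).pow 2).const_mul ε)
  have hhh : HasDerivAt (fun x ↦ deriv f x + ε * (2 * (x - x₀)))
      (deriv (deriv f) x₀ + ε * 2) x₀ := by
    simpa using (differentiableAt_of_deriv_ne_zero hdd.ne).hasDerivAt.fun_add
      ((((hasDerivAt_id x₀).sub_const x₀).const_mul 2).const_mul ε)
  have hmax : IsLocalMax (fun x ↦ f x + ε * (x - x₀) ^ 2) x₀ := by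
    refine isLocalMax_of_deriv_deriv_neg ?_ ?_ (hh x₀).continuousAt
    · rw [deriv_eq hh, hhh.deriv]
      linarith
    · simp [(hh x₀).deriv, hd]
  filter_upwards [nhdsWithin_le_nhds hmax, self_mem_nhdsWithin] with x hx hne
  have hpos : 0 < ε * (x - x₀) ^ 2 :=
    mul_pos (by linarith) (even_two.pow_pos (sub_ne_zero.2 hne))
  simp only [sub_self] at hx
  linarith

lemma eventually_lt_one_sub_smul {E : Type*} [NormedAddCommGroup E] [NormedSpace ℝ E] {f : E → ℝ}
    {x : E} (hf : fderiv ℝ f x x < 0) :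
    ∀ᶠ s in nhdsWithin (0 : ℝ) (Set.Ioi 0), f x < f ((1 - s) • x) := by
  have hfx : DifferentiableAt ℝ f x := by
    by_contra h
    simp [fderiv_zero_of_not_differentiableAt h] at hf
  have hline : HasDerivAt (fun s : ℝ ↦ (1 - s) • x) (-x) 0 := by
    simpa using ((hasDerivAt_id (0 : ℝ)).const_sub 1).smul_const x
  have hderiv : HasDerivAt (fun s : ℝ ↦ f ((1 - s) • x) - f x) (-fderiv ℝ f x x) 0 := by
    rw [← map_neg]
    refine HasFDerivAt.comp_hasDerivAt 0 (f := fun s : ℝ ↦ (1 - s) • x) ?_ hline |>.sub_const _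
    simpa using hfx.hasFDerivAt
  have hsign := eventually_nhdsWithin_sign_eq_of_deriv_pos (hderiv.deriv ▸ neg_pos.2 hf) (by simp)
  filter_upwards [nhdsWithin_le_nhds hsign, self_mem_nhdsWithin] with s hs hs0
  have hs_pos : 0 < s := hs0
  rwa [sub_zero, sign_pos hs_pos, sign_eq_one_iff, sub_pos] at hs

lemma fderiv_self_nonpos_of_isLocalMinOn_closedBall {E : Type*} [NormedAddCommGroup E]
    [NormedSpace ℝ E] {f : E → ℝ} {r : ℝ} {x : E} (hr : 0 ≤ r)
    (hx : x ∈ Metric.closedBall 0 r) (hf : DifferentiableAt ℝ f x)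
    (hmin : IsLocalMinOn f (Metric.closedBall 0 r) x) : fderiv ℝ f x x ≤ 0 := by
  have hcone : -x ∈ posTangentConeAt (Metric.closedBall 0 r) x := by
    simpa using sub_mem_posTangentConeAt_of_segment_subset
      ((convex_closedBall (0 : E) r).segment_subset hx (Metric.mem_closedBall_self hr))
  simpa using hmin.hasFDerivWithinAt_nonneg hf.hasFDerivAt.hasFDerivWithinAt hcone

lemma ncard_isLocalMin_add_ncard_isLocalMax_le {E : Type*} [NormedAddCommGroup E] [NormedSpace ℝ E]
    [Nontrivial E] {f : E → ℝ} {U : Set E} (hU : IsOpen U)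
    (hfin : {x ∈ U | fderiv ℝ f x = 0}.Finite) :
    {x ∈ U | IsLocalMin f x}.ncard + {x ∈ U | IsLocalMax f x}.ncard ≤
      {x ∈ U | fderiv ℝ f x = 0}.ncard := by
  have hminima : {x ∈ U | IsLocalMin f x} ⊆ {x ∈ U | fderiv ℝ f x = 0} := fun x hx ↦
    ⟨hx.1, hx.2.fderiv_eq_zero⟩
  have hmaxima : {x ∈ U | IsLocalMax f x} ⊆ {x ∈ U | fderiv ℝ f x = 0} := fun x hx ↦
    ⟨hx.1, hx.2.fderiv_eq_zero⟩
  have hdisj : Disjoint {x ∈ U | IsLocalMin f x} {x ∈ U | IsLocalMax f x} := by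
    rw [Set.disjoint_left]
    rintro x ⟨hxU, hmin⟩ ⟨-, hmax⟩
    have hconst : f =ᶠ[nhds x] fun _ ↦ f x := by
      filter_upwards [hmin, hmax] with y hy hy' using le_antisymm hy' hy
    have : (nhdsWithin x {x}ᶜ).NeBot := Module.punctured_nhds_neBot ℝ E x
    refine infinite_of_mem_nhds x ?_ hfin
    filter_upwards [hconst.eventuallyEq_nhds, hU.mem_nhds hxU] with y hy hyU
    exact ⟨hyU, by simp [hy.fderiv_eq]⟩
  rw [← Set.ncard_union_eq hdisj (hfin.subset hminima) (hfin.subset hmaxima)]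
  exact Set.ncard_le_ncard (Set.union_subset hminima hmaxima) hfin

namespace Ribbon

variable {n : ℕ} (a : Ribbon n)

/-- The second derivative of `φ` along the circle at the `i`-th node: it is negative at the local
maxima and positive at the local minima. -/
def curv (i : Fin n) : ℝ := deriv (deriv a.g) (a.θ i)

/-- The negative local maxima of a ribbon. -/
def negMax : Finset (Fin n) := {i | a.curv i < 0 ∧ a.ν i = -1}

/-- The positive local minima of a ribbon. -/
def posMin : Finset (Fin n) := {i | 0 < a.curv i ∧ a.ν i = 1}

lemma differentiable_g : Differentiable ℝ a.g := a.smooth_g.differentiable (by simp)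

end Ribbon

lemma isExtension_iff {n : ℕ} {a : Ribbon n} {f : E2 → ℝ} : IsExtension a f ↔
    ContDiff ℝ (⊤ : ℕ∞) f ∧ (∀ t : ℝ, f (sphPt t) = a.g t) ∧
      (∀ x ∈ Metric.sphere (0 : E2) 1, fderiv ℝ f x ≠ 0) ∧
      ∀ i, a.curv i * (a.ν i * fderiv ℝ f (sphPt (a.θ i)) (sphPt (a.θ i))) < 0 := by
  have hsign (i : Fin n) (x : ℝ) :
      ((a.curv i < 0 → 0 < x) ∧ (0 < a.curv i → x < 0)) ↔ a.curv i * x < 0 := by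
    rw [mul_neg_iff]
    rcases (a.node_nondeg i).lt_or_gt with h | h
    · simp [Ribbon.curv, h, h.not_gt]
    · simp [Ribbon.curv, h, h.not_gt]
  simp only [IsExtension, inner_gradient, ← hsign]
  rfl

namespace IsExtension

variable {n : ℕ} {a : Ribbon n} {f : E2 → ℝ}

lemma differentiable (hf : IsExtension a f) : Differentiable ℝ f := hf.1.differentiable (by simp)

lemma exists_isPass (hf : IsExtension a f) {i : Fin n} (hi : i ∈ a.negMax) :
    ∃ l r x, IsPass (Metric.closedBall 0 1) f (sphPt (a.θ i)) l r x := by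
  obtain ⟨-, hfg, -, hsign⟩ := isExtension_iff.1 hf
  obtain ⟨hcurv, hν⟩ := (Finset.mem_filter.1 hi).2
  refine exists_isPass_sphPt ?_ <| eventually_lt_one_sub_smul ?_
  · simpa only [hfg] using
      eventually_lt_of_deriv_deriv_neg a.differentiable_g (a.node_crit i) hcurv
  · have := pos_of_mul_neg_right (hsign i) hcurv.le
    rw [hν] at this
    push_cast at this
    linarith

lemma exists_posMin_of_isLocalMinOn (hf : IsExtension a f) {x : E2} (hx : ‖x‖ = 1)
    (hmin : IsLocalMinOn f (Metric.closedBall 0 1) x) : ∃ i ∈ a.posMin, sphPt (a.θ i) = x := by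
  obtain ⟨-, hfg, -, hsign⟩ := isExtension_iff.1 hf
  obtain ⟨t, ht, rfl⟩ := exists_sphPt_eq_of_mem_Ico hx 0
  have hmin_g : IsLocalMin a.g t := by
    have hmaps : Filter.Tendsto sphPt (nhds t) (nhdsWithin (sphPt t) (Metric.closedBall 0 1)) :=
      tendsto_nhdsWithin_iff.2 ⟨continuous_sphPt.continuousAt, .of_forall sphPt_mem_closedBall⟩
    simpa only [IsLocalMin, IsMinFilter, hfg] using hmaps.eventually hmin
  obtain ⟨i, rfl⟩ := a.crit_only t (by simpa using ht) hmin_g.deriv_eq_zero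
  have hcurv : 0 < a.curv i := by
    refine (a.node_nondeg i).lt_or_gt.resolve_left fun h ↦ ?_
    have hlt := eventually_lt_of_deriv_deriv_neg a.differentiable_g (a.node_crit i) h
    obtain ⟨t, ht, ht'⟩ := (hlt.and (nhdsWithin_le_nhds hmin_g)).exists
    exact ht.not_ge ht'
  have hrad := fderiv_self_nonpos_of_isLocalMinOn_closedBall zero_le_one
    (mem_closedBall_zero_iff.2 hx.le) hf.differentiable.differentiableAt hmin
  have hν := neg_of_mul_neg_right (hsign i) hcurv.le
  have hν_pos : (0 : ℝ) < a.ν i := by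
    by_contra! h
    exact hν.not_ge (mul_nonneg_of_nonpos_of_nonpos h hrad)
  have hν_one := (a.nu_sign i).resolve_right fun h ↦ by norm_num [h] at hν_pos
  exact ⟨i, by simp [Ribbon.posMin, hcurv, hν_one], rfl⟩

theorem card_negMax_add_one_le (hf : IsExtension a f) (hfin : (critPts f).Finite) :
    a.negMax.card + 1 ≤ a.posMin.card + (critPts f).ncard := by
  set D := Metric.closedBall (0 : E2) 1
  have hD : interior D = Metric.ball 0 1 := interior_closedBall _ one_ne_zero
  set maxima := {x ∈ interior D | IsLocalMax f x}
  set minima := {x ∈ interior D | IsLocalMin f x}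
  have hminima : minima.Finite :=
    hfin.subset fun x hx ↦ ⟨hD ▸ hx.1, hx.2.fderiv_eq_zero⟩
  have hmaxima : maxima.Finite :=
    hfin.subset fun x hx ↦ ⟨hD ▸ hx.1, hx.2.fderiv_eq_zero⟩
  have hsum : minima.ncard + maxima.ncard ≤ (critPts f).ncard := by
    rw [critPts, ← hD]
    exact ncard_isLocalMin_add_ncard_isLocalMax_le isOpen_interior (hD ▸ hfin)
  have hminOn : {x ∈ D | IsLocalMinOn f D x} ⊆
      minima ∪ (fun i ↦ sphPt (a.θ i)) '' (a.posMin : Set (Fin n)) := by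
    rintro x ⟨hxD, hx⟩
    rcases (mem_closedBall_zero_iff.1 hxD).lt_or_eq with hx1 | hx1
    · have hx_int : x ∈ interior D := by simpa [hD] using hx1
      exact Or.inl ⟨hx_int, hx.isLocalMin (mem_interior_iff_mem_nhds.1 hx_int)⟩
    · exact Or.inr (hf.exists_posMin_of_isLocalMinOn hx1 hx)
  have hminOn_fin := (hminima.union (Set.toFinite _)).subset hminOn
  have hminOn_card : {x ∈ D | IsLocalMinOn f D x}.ncard ≤ minima.ncard + a.posMin.card := by
    refine (Set.ncard_le_ncard hminOn (hminima.union (Set.toFinite _))).trans <|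
      (Set.ncard_union_le _ _).trans <| Nat.add_le_add_left ?_ _
    exact (Set.ncard_image_le (Set.toFinite _)).trans_eq (Set.ncard_coe_finset _)
  choose! l r x hpass using fun i (hi : i ∈ a.negMax) ↦ hf.exists_isPass hi
  have hcount : a.negMax.card + 1 ≤ {x ∈ D | IsLocalMinOn f D x}.ncard + maxima.ncard :=
    card_add_one_le_ncard_add_ncard_of_isPass (convex_closedBall 0 1) (isCompact_closedBall 0 1)
      ⟨0, by simp [D]⟩ hf.1.continuous.continuousOn hpass
      (fun i _ j _ hij ↦ a.values_distinct i j <| by rwa [← hf.2.1, ← hf.2.1]) hminOn_fin hmaxima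
  omega

end IsExtension

/-! ### Alternation of maxima and minima -/

lemma forall_neg_and_deriv_pos_of_deriv_neg {u : ℝ → ℝ} {s t : ℝ} (hst : s < t)
    (hu : ContinuousOn u (Set.Ioo s t)) (hne : ∀ x ∈ Set.Ioo s t, u x ≠ 0) (hs : u s = 0)
    (ht : u t = 0) (hds : deriv u s < 0) (hdt : deriv u t ≠ 0) :
    (∀ x ∈ Set.Ioo s t, u x < 0) ∧ 0 < deriv u t := by
  have hneg (x) (hx : x ∈ Set.Ioo s t) : u x < 0 := by
    have hsign := (eventually_nhdsWithin_sign_eq_of_deriv_neg hds hs).filter_mono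
      (nhdsWithin_le_nhds (s := Set.Ioi s))
    obtain ⟨y, hy, hyst⟩ := (hsign.and (Ioo_mem_nhdsGT hst)).exists
    rw [sign_neg (sub_neg.2 hyst.1), sign_eq_neg_one_iff] at hy
    by_contra! hx0
    obtain ⟨z, hz, hz0⟩ := isPreconnected_Ioo.intermediate_value hyst hx hu ⟨hy.le, hx0⟩
    exact hne z hz hz0
  refine ⟨hneg, hdt.lt_or_gt.resolve_left fun h ↦ ?_⟩
  have hsign := (eventually_nhdsWithin_sign_eq_of_deriv_neg h ht).filter_mono
    (nhdsWithin_le_nhds (s := Set.Iio t))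
  obtain ⟨y, hy, hyst⟩ := (hsign.and (Ioo_mem_nhdsLT hst)).exists
  rw [sign_pos (sub_pos.2 hyst.2), sign_eq_one_iff] at hy
  exact lt_asymm hy (hneg y hyst)

lemma periodic_deriv {f : ℝ → ℝ} {c : ℝ} (hf : Function.Periodic f c) :
    Function.Periodic (deriv f) c := fun x ↦ by
  rw [← deriv_comp_add_const, hf.funext]

namespace Ribbon

variable {n : ℕ} (a : Ribbon n)

lemma exists_next_node (i : Fin n) : ∃ k : ℤ,
    a.θ i < a.θ (finRotate n i) + k * (2 * Real.pi) ∧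
      ∀ x ∈ Set.Ioo (a.θ i) (a.θ (finRotate n i) + k * (2 * Real.pi)), deriv a.g x ≠ 0 := by
  obtain ⟨m, rfl⟩ : ∃ m, n = m + 1 := Nat.exists_eq_add_one.2 a.n_pos
  have hnonneg (j) := (a.theta_mem j).1
  have hlt (j) := (a.theta_mem j).2
  by_cases hi : i = Fin.last m
  · subst hi
    rw [finRotate_last]
    refine ⟨1, by push_cast; linarith [hnonneg 0, hlt (Fin.last m)], fun x ⟨hx, hx'⟩ hx0 ↦ ?_⟩
    push_cast at hx'
    rcases lt_or_ge x (2 * Real.pi) with hx2 | hx2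
    · obtain ⟨j, rfl⟩ := a.crit_only x ⟨(hnonneg _).trans hx.le, hx2⟩ hx0
      exact hx.not_ge (a.theta_mono.monotone (Fin.le_last j))
    · rw [← (periodic_deriv a.periodic_g).sub_eq] at hx0
      obtain ⟨j, hj⟩ := a.crit_only _ ⟨sub_nonneg.2 hx2, by linarith [hlt 0]⟩ hx0
      linarith [a.theta_mono.monotone (Fin.zero_le j)]
  · have hnext : (finRotate (m + 1) i : ℕ) = i + 1 := coe_finRotate_of_ne_last hi
    have hlt_next : i < finRotate (m + 1) i := Fin.lt_def.2 (by omega)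
    refine ⟨0, by simpa using a.theta_mono hlt_next, fun x ⟨hx, hx'⟩ hx0 ↦ ?_⟩
    rw [Int.cast_zero, zero_mul, add_zero] at hx'
    obtain ⟨j, rfl⟩ := a.crit_only x ⟨(hnonneg i).trans hx.le, hx'.trans (hlt _)⟩ hx0
    have hij := Fin.lt_def.1 (a.theta_mono.lt_iff_lt.1 hx)
    have hj := Fin.lt_def.1 (a.theta_mono.lt_iff_lt.1 hx')
    omega

lemma curv_ne_zero (i : Fin n) : a.curv i ≠ 0 := a.node_nondeg i

lemma deriv_eq_zero_add_int_mul (i : Fin n) (k : ℤ) :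
    deriv a.g (a.θ i + k * (2 * Real.pi)) = 0 :=
  ((periodic_deriv a.periodic_g).int_mul k _).trans (a.node_crit i)

lemma deriv_deriv_add_int_mul (i : Fin n) (k : ℤ) :
    deriv (deriv a.g) (a.θ i + k * (2 * Real.pi)) = a.curv i :=
  (periodic_deriv (periodic_deriv a.periodic_g)).int_mul k _

lemma continuous_deriv : Continuous (deriv a.g) := a.smooth_g.continuous_deriv (by simp)

variable {a}

lemma exists_forall_deriv_neg {i : Fin n} (hi : a.curv i < 0) : ∃ k : ℤ,
    a.θ i < a.θ (finRotate n i) + k * (2 * Real.pi) ∧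
      (∀ x ∈ Set.Ioo (a.θ i) (a.θ (finRotate n i) + k * (2 * Real.pi)), deriv a.g x < 0) ∧
      0 < a.curv (finRotate n i) := by
  obtain ⟨k, hlt, hne⟩ := a.exists_next_node i
  obtain ⟨hneg, hpos⟩ := forall_neg_and_deriv_pos_of_deriv_neg hlt a.continuous_deriv.continuousOn
    hne (a.node_crit i) (a.deriv_eq_zero_add_int_mul _ k) hi
    (a.deriv_deriv_add_int_mul _ k ▸ a.curv_ne_zero _)
  exact ⟨k, hlt, hneg, a.deriv_deriv_add_int_mul _ k ▸ hpos⟩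

lemma exists_forall_deriv_pos {i : Fin n} (hi : 0 < a.curv i) : ∃ k : ℤ,
    a.θ i < a.θ (finRotate n i) + k * (2 * Real.pi) ∧
      (∀ x ∈ Set.Ioo (a.θ i) (a.θ (finRotate n i) + k * (2 * Real.pi)), 0 < deriv a.g x) ∧
      a.curv (finRotate n i) < 0 := by
  obtain ⟨k, hlt, hne⟩ := a.exists_next_node i
  have hderiv (t : ℝ) : deriv (fun x ↦ -deriv a.g x) t = -deriv (deriv a.g) t := deriv.fun_neg
  obtain ⟨hpos, hneg⟩ := forall_neg_and_deriv_pos_of_deriv_neg (u := fun x ↦ -deriv a.g x) hlt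
    a.continuous_deriv.neg.continuousOn (fun x hx ↦ neg_ne_zero.2 (hne x hx))
    (by rw [a.node_crit, neg_zero]) (by rw [a.deriv_eq_zero_add_int_mul, neg_zero])
    (by rw [hderiv]; exact neg_lt_zero.2 hi)
    (by rw [hderiv, a.deriv_deriv_add_int_mul]; exact neg_ne_zero.2 (a.curv_ne_zero _))
  rw [hderiv, neg_pos, a.deriv_deriv_add_int_mul] at hneg
  exact ⟨k, hlt, fun x hx ↦ neg_lt_zero.1 (hpos x hx), hneg⟩

lemma curv_finRotate_pos {i : Fin n} (hi : a.curv i < 0) :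
    0 < a.curv (finRotate n i) ∧ a.g (a.θ (finRotate n i)) < a.g (a.θ i) := by
  obtain ⟨k, hlt, hneg, hpos⟩ := exists_forall_deriv_neg hi
  have hanti := strictAntiOn_of_deriv_neg (convex_Icc _ _)
    a.differentiable_g.continuous.continuousOn
    (by rwa [interior_Icc])
  rw [← a.periodic_g.int_mul k]
  exact ⟨hpos, hanti (Set.left_mem_Icc.2 hlt.le) (Set.right_mem_Icc.2 hlt.le) hlt⟩

lemma curv_finRotate_neg {i : Fin n} (hi : 0 < a.curv i) :
    a.curv (finRotate n i) < 0 ∧ a.g (a.θ i) < a.g (a.θ (finRotate n i)) := by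
  obtain ⟨k, hlt, hpos, hneg⟩ := exists_forall_deriv_pos hi
  have hmono := strictMonoOn_of_deriv_pos (convex_Icc _ _)
    a.differentiable_g.continuous.continuousOn
    (by rwa [interior_Icc])
  rw [← a.periodic_g.int_mul k (a.θ (finRotate n i))]
  exact ⟨hneg, hmono (Set.left_mem_Icc.2 hlt.le) (Set.right_mem_Icc.2 hlt.le) hlt⟩

lemma curv_finRotate_pos_iff {i : Fin n} : 0 < a.curv (finRotate n i) ↔ a.curv i < 0 :=
  ⟨fun h ↦ (a.curv_ne_zero i).lt_or_gt.resolve_right fun hi ↦ lt_asymm h (curv_finRotate_neg hi).1,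
    fun h ↦ (curv_finRotate_pos h).1⟩

variable (a)

/-- The local maxima of a ribbon. -/
def maxs : Finset (Fin n) := {i | a.curv i < 0}

/-- The local minima of a ribbon. -/
def mins : Finset (Fin n) := {i | 0 < a.curv i}

/-- The negative nodes of a ribbon. -/
def neg : Finset (Fin n) := {i | a.ν i = -1}

lemma card_maxs_add_card_mins : a.maxs.card + a.mins.card = n := by
  rw [maxs, mins, ← Finset.card_union_of_disjoint, ← Finset.filter_or,
    Finset.filter_true_of_mem fun i _ ↦ (a.curv_ne_zero i).lt_or_gt, Finset.card_univ,
    Fintype.card_fin]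
  exact Finset.disjoint_filter.2 fun i _ ↦ lt_asymm

lemma card_maxs : a.maxs.card = a.mins.card :=
  Finset.card_equiv (finRotate n) fun i ↦ by
    simp only [maxs, mins, Finset.mem_filter_univ, curv_finRotate_pos_iff]

lemma card_mins_pos : 0 < a.mins.card := by
  have := a.card_maxs_add_card_mins
  have := a.card_maxs
  have := a.n_pos
  omega

lemma sigma_add_two_mul_card_neg : a.sigma + 2 * a.neg.card = n := by
  have hν (i : Fin n) : a.ν i + 2 * (if a.ν i = -1 then 1 else 0) = 1 := by
    rcases a.nu_sign i with h | h <;> simp [h]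
  have hsum := Finset.sum_congr (rfl : (Finset.univ : Finset (Fin n)) = _) fun i _ ↦ hν i
  rw [Finset.sum_add_distrib, ← Finset.mul_sum, Finset.sum_boole] at hsum
  simpa [neg, sigma] using hsum

lemma card_mins_add_card_neg : (a.mins.card + a.neg.card : ℤ) = n - a.sigma / 2 := by
  have := a.card_maxs_add_card_mins
  have := a.card_maxs
  have := a.sigma_add_two_mul_card_neg
  omega

lemma card_posMin_add_card_neg : a.posMin.card + a.neg.card = a.mins.card + a.negMax.card := by
  have hposMin : a.posMin = a.mins \ a.neg := by
    ext i
    rcases a.nu_sign i with h | h <;> simp [posMin, mins, neg, h]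
  have hnegMax : a.negMax = a.neg \ a.mins := by
    ext i
    simp [negMax, mins, neg, (a.curv_ne_zero i).le_iff_lt, and_comm]
  rw [hposMin, hnegMax, Finset.card_sdiff_add_card, add_comm, Finset.card_sdiff_add_card,
    Finset.union_comm]

lemma sigma_div_two : a.sigma / 2 = a.posMin.card - a.negMax.card := by
  have := a.card_posMin_add_card_neg
  have := a.card_mins_add_card_neg
  have := a.card_maxs_add_card_mins
  have := a.card_maxs
  have := a.sigma_add_two_mul_card_neg
  omega

end Ribbon

theorem IsExtension.toNat_le_encard_critPts {n : ℕ} {a : Ribbon n} {f : E2 → ℝ}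
    (hf : IsExtension a f) : ((1 - a.sigma / 2).toNat : ℕ∞) ≤ (critPts f).encard := by
  by_cases hfin : (critPts f).Finite
  · rw [← hfin.cast_ncard_eq, Nat.cast_le, a.sigma_div_two]
    have := hf.card_negMax_add_one_le hfin
    omega
  · simp [Set.Infinite.encard_eq hfin]

/-! ### Homogeneous functions and smoothness at the origin -/

section Homogeneous

variable {E F : Type*} [NormedAddCommGroup E] [NormedSpace ℝ E]
  [NormedAddCommGroup F] [NormedSpace ℝ F]

lemma apply_zero_of_homogeneous {d : ℕ} (hd : d ≠ 0) {H : E → F}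
    (hH : ∀ t : ℝ, 0 < t → ∀ x, H (t • x) = t ^ d • H x) : H 0 = 0 := by
  have h : ((2 : ℝ) ^ d - 1) • H 0 = 0 := by
    rw [sub_smul, one_smul, ← hH 2 two_pos 0, smul_zero, sub_self]
  exact (smul_eq_zero.1 h).resolve_left (sub_pos.2 (one_lt_pow₀ one_lt_two hd)).ne'

lemma exists_norm_le_mul_norm_pow_of_homogeneous [ProperSpace E] {d : ℕ} (hd : d ≠ 0) {H : E → F}
    (hH : ∀ t : ℝ, 0 < t → ∀ x, H (t • x) = t ^ d • H x)
    (hc : ∀ x, x ≠ 0 → ContinuousAt H x) : ∃ C : ℝ, ∀ x, ‖H x‖ ≤ C * ‖x‖ ^ d := by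
  obtain ⟨C, hC⟩ := (isCompact_sphere (0 : E) 1).exists_bound_of_continuousOn (f := H) fun x hx ↦
    (hc x (ne_zero_of_mem_unit_sphere ⟨x, hx⟩)).continuousWithinAt
  refine ⟨C, fun x ↦ ?_⟩
  rcases eq_or_ne x 0 with rfl | hx
  · simp [apply_zero_of_homogeneous hd hH, hd]
  · have hx' : ‖x‖ ≠ 0 := norm_ne_zero_iff.2 hx
    calc ‖H x‖ = ‖x‖ ^ d * ‖H (‖x‖⁻¹ • x)‖ := by
          rw [← norm_norm x, ← norm_pow, ← norm_smul, norm_norm, ← hH _ (norm_pos_iff.2 hx),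
            smul_inv_smul₀ hx']
      _ ≤ C * ‖x‖ ^ d := by
          rw [mul_comm]
          gcongr
          exact hC _ (by simp [norm_smul, hx'])

lemma fderiv_smul_of_homogeneous {d : ℕ} {H : E → F} (hdiff : Differentiable ℝ H)
    (hH : ∀ t : ℝ, 0 < t → ∀ x, H (t • x) = t ^ (d + 1) • H x) {t : ℝ} (ht : 0 < t) (x : E) :
    fderiv ℝ H (t • x) = t ^ d • fderiv ℝ H x := by
  have h : t • fderiv ℝ H (t • x) = t • t ^ d • fderiv ℝ H x := by
    rw [← fderiv_comp_smul, funext (hH t ht), fderiv_fun_const_smul (hdiff x), smul_smul, pow_succ']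
  exact smul_right_injective _ ht.ne' h

end Homogeneous

universe u in
theorem contDiff_of_homogeneous {E F : Type u} [NormedAddCommGroup E] [NormedSpace ℝ E]
    [ProperSpace E] [NormedAddCommGroup F] [NormedSpace ℝ F] (d : ℕ) {H : E → F}
    (hH : ∀ t : ℝ, 0 < t → ∀ x, H (t • x) = t ^ (d + 1) • H x)
    (hs : ∀ x, x ≠ 0 → ContDiffAt ℝ d H x) : ContDiff ℝ d H := by
  induction d generalizing F with
  | zero =>
    obtain ⟨C, hC⟩ := exists_norm_le_mul_norm_pow_of_homogeneous (Nat.succ_ne_zero 0) hH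
      fun x hx ↦ (hs x hx).continuousAt
    rw [Nat.cast_zero, contDiff_zero, continuous_iff_continuousAt]
    intro x
    rcases eq_or_ne x 0 with rfl | hx
    · rw [ContinuousAt, apply_zero_of_homogeneous (Nat.succ_ne_zero 0) hH]
      exact squeeze_zero_norm hC ((by fun_prop : Continuous fun x : E ↦ C * ‖x‖ ^ (0 + 1)).tendsto'
        0 0 (by simp))
    · exact (hs x hx).continuousAt
  | succ d ih =>
    obtain ⟨C, hC⟩ := exists_norm_le_mul_norm_pow_of_homogeneous (Nat.succ_ne_zero (d + 1)) hH
      fun x hx ↦ (hs x hx).continuousAt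
    have hdiff : Differentiable ℝ H := fun x ↦ by
      rcases eq_or_ne x 0 with rfl | hx
      · have hO : H =O[nhds 0] fun x ↦ ‖x - 0‖ ^ (d + 2) :=
          .of_bound C (.of_forall fun x ↦ by simpa using hC x)
        exact (hO.hasFDerivAt (by omega)).differentiableAt
      · exact (hs x hx).differentiableAt (by simp)
    push_cast at hs ⊢
    exact contDiff_succ_iff_fderiv.2 ⟨hdiff, by simp,
      ih (fun t ht x ↦ fderiv_smul_of_homogeneous hdiff hH ht x)
        fun x hx ↦ (hs x hx).fderiv_right le_rfl⟩

-- Trade a power of `‖x‖⁻²`, absorbed by the flat factor, for a power of `‖x‖²` multiplying `G`.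
theorem contDiff_expNegInvGlue_norm_sq_mul {E : Type} [NormedAddCommGroup E]
    [InnerProductSpace ℝ E] [ProperSpace E] {G : E → ℝ}
    (hG : ∀ t : ℝ, 0 < t → ∀ x, G (t • x) = G x)
    (hs : ∀ x, x ≠ 0 → ContDiffAt ℝ (⊤ : ℕ∞) G x) :
    ContDiff ℝ (⊤ : ℕ∞) fun x ↦ expNegInvGlue (‖x‖ ^ 2) * G x := by
  refine contDiff_infty.2 fun n ↦ ?_
  have hfactor : (fun x : E ↦ expNegInvGlue (‖x‖ ^ 2) * G x) = fun x ↦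
      ((Polynomial.X ^ (n + 1) : Polynomial ℝ).eval (‖x‖ ^ 2)⁻¹ * expNegInvGlue (‖x‖ ^ 2)) *
        ((‖x‖ ^ 2) ^ (n + 1) * G x) := by
    ext x
    rcases eq_or_ne x 0 with rfl | hx
    · simp
    · have hcancel : ((‖x‖ ^ 2)⁻¹) ^ (n + 1) * (‖x‖ ^ 2) ^ (n + 1) = 1 := by
        rw [← mul_pow, inv_mul_cancel₀ (pow_ne_zero _ (norm_ne_zero_iff.2 hx)), one_pow]
      rw [Polynomial.eval_pow, Polynomial.eval_X]
      linear_combination (-(expNegInvGlue (‖x‖ ^ 2) * G x)) * hcancel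
  rw [hfactor]
  refine ContDiff.mul ?_ ?_
  · exact ((expNegInvGlue.contDiff_polynomial_eval_inv_mul (n := (⊤ : ℕ∞)) _).comp
      (contDiff_norm_sq ℝ)).of_le (by exact_mod_cast le_top)
  · refine (contDiff_of_homogeneous (2 * n + 1) (fun t ht x ↦ ?_) fun x hx ↦ ?_).of_le
      (by norm_cast; omega)
    · rw [hG t ht, norm_smul, Real.norm_of_nonneg ht.le, smul_eq_mul]
      ring
    · exact contDiffAt_infty.1 (((contDiff_norm_sq ℝ).contDiffAt.pow _).mul (hs x hx)) _

/-! ### Functions of the angle -/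

/-- The function `g` of the polar angle, as a function on the punctured plane; its value at the
origin is junk. -/
def angular (g : ℝ → ℝ) (x : E2) : ℝ := g (toComplex x).arg

section Angular

variable {g : ℝ → ℝ}

lemma apply_eq_of_coe_angle_eq (hg : Function.Periodic g (2 * Real.pi)) {s t : ℝ}
    (h : (s : Real.Angle) = t) : g s = g t := by
  rw [← hg.lift_coe s, ← hg.lift_coe t]
  exact congrArg hg.lift h

lemma angular_smul (g : ℝ → ℝ) {t : ℝ} (ht : 0 < t) (x : E2) :
    angular g (t • x) = angular g x := by
  rw [angular, angular, map_smul, Complex.real_smul, Complex.arg_real_mul _ ht]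

lemma angular_smul_sphPt (hg : Function.Periodic g (2 * Real.pi)) {r : ℝ} (hr : 0 < r) (t : ℝ) :
    angular g (r • sphPt t) = g t := by
  rw [angular_smul g hr, angular, toComplex_sphPt]
  exact apply_eq_of_coe_angle_eq hg (by rw [Complex.arg_exp_mul_I, Real.Angle.coe_toIocMod])

lemma contDiffAt_arg {z : ℂ} (hz : z ∈ Complex.slitPlane) :
    ContDiffAt ℝ (⊤ : ℕ∞) Complex.arg z := by
  have hlog : ContDiffAt ℝ (⊤ : ℕ∞) Complex.log z := (Complex.contDiffAt_log hz).restrict_scalars ℝ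
  exact (Complex.imCLM.contDiff.contDiffAt.comp z hlog).congr_of_eventuallyEq
    (.of_forall fun w ↦ (Complex.log_im w).symm)

-- Near `x` the angle is `arg (y / x) + arg x` up to a multiple of `2π`, and `y / x` is near `1`.
lemma contDiffAt_angular (hg : Function.Periodic g (2 * Real.pi)) (hs : ContDiff ℝ (⊤ : ℕ∞) g)
    {x : E2} (hx : x ≠ 0) : ContDiffAt ℝ (⊤ : ℕ∞) (angular g) x := by
  have hx' : toComplex x ≠ 0 := by simpa using hx
  set w := (toComplex x)⁻¹ with hw
  have hlocal : ContDiffAt ℝ (⊤ : ℕ∞) (fun y ↦ g ((toComplex y * w).arg - w.arg)) x := by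
    refine hs.contDiffAt.comp x (ContDiffAt.sub ?_ contDiffAt_const)
    refine ContDiffAt.comp x (contDiffAt_arg ?_)
      (toComplex.contDiff.contDiffAt.mul contDiffAt_const)
    rw [hw, mul_inv_cancel₀ hx']
    exact Complex.one_mem_slitPlane
  refine hlocal.congr_of_eventuallyEq ?_
  filter_upwards [isOpen_ne.mem_nhds hx] with y hy
  have hy' : toComplex y ≠ 0 := by simpa using hy
  refine apply_eq_of_coe_angle_eq hg ?_
  rw [Real.Angle.coe_sub, Complex.arg_mul_coe_angle hy' (inv_ne_zero hx'), add_sub_cancel_right]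

end Angular

/-! ### The cone extension -/

lemma exists_small_interpolation {ι : Type*} [Finite ι] {v : ι → ℝ} (hv : Function.Injective v)
    (y : ι → ℝ) {K : Set ℝ} (hK : IsCompact K) :
    ∃ ε > 0, ∃ Q : Polynomial ℝ,
      (∀ i, Q.eval (v i) = ε * y i) ∧ ∀ x ∈ K, |Q.derivative.eval x| < 1 := by
  classical
  cases nonempty_fintype ι
  set P : Polynomial ℝ := Lagrange.interpolate Finset.univ v y with hP
  obtain ⟨C, hC⟩ := hK.exists_bound_of_continuousOn P.derivative.continuous.continuousOn
  refine ⟨(|C| + 1)⁻¹, by positivity, Polynomial.C (|C| + 1)⁻¹ * P, fun i ↦ ?_, fun x hx ↦ ?_⟩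
  · rw [Polynomial.eval_C_mul, hP,
      Lagrange.eval_interpolate_at_node y hv.injOn (Finset.mem_univ i)]
  · have hle : |P.derivative.eval x| ≤ |C| := (hC x hx).trans (le_abs_self C)
    rw [Polynomial.derivative_C_mul, Polynomial.eval_C_mul, abs_mul, abs_of_pos (by positivity),
      inv_mul_lt_iff₀ (by positivity)]
    linarith

lemma strictMonoOn_pow_mul_one_add_mul {m : ℕ} (hm : m ≠ 0) :
    StrictMonoOn (fun s : ℝ ↦ s ^ m * (1 + m * s)) (Set.Ici 0) := by
  intro s hs t _ hst
  have hs' : (0 : ℝ) ≤ s := hs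
  have ht' : 0 < t := hs'.trans_lt hst
  calc s ^ m * (1 + m * s) ≤ s ^ m * (1 + m * t) := by gcongr
    _ < t ^ m * (1 + m * t) := by gcongr

lemma exists_eq_norm_smul_sphPt {x : E2} (hx : x ≠ 0) (b : ℝ) :
    ∃ t ∈ Set.Ico b (b + 2 * Real.pi), x = ‖x‖ • sphPt t := by
  have hx' : ‖x‖ ≠ 0 := norm_ne_zero_iff.2 hx
  obtain ⟨t, ht, htx⟩ := exists_sphPt_eq_of_mem_Ico (q := ‖x‖⁻¹ • x) (by simp [norm_smul, hx']) b
  exact ⟨t, ht, by rw [htx, smul_inv_smul₀ hx']⟩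

/-- The extension of `g` to the plane that is, up to a flat reparametrization of the radius, the
cone over `g` with apex at height `c`, twisted by a correction `Q ∘ g` which vanishes to first
order on the unit circle and whose radial derivative there is governed by `m`. -/
def coneExt (g : ℝ → ℝ) (Q : Polynomial ℝ) (c : ℝ) (m : ℕ) (x : E2) : ℝ :=
  c + Real.exp 1 * (expNegInvGlue (‖x‖ ^ 2) *
    (angular g x - c + (1 - (‖x‖ ^ 2) ^ m) * Q.eval (angular g x)))

section ConeExt

variable {g : ℝ → ℝ} {Q : Polynomial ℝ} {c : ℝ} {m : ℕ}

lemma contDiff_coneExt (hp : Function.Periodic g (2 * Real.pi)) (hg : ContDiff ℝ (⊤ : ℕ∞) g) :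
    ContDiff ℝ (⊤ : ℕ∞) (coneExt g Q c m) := by
  have hQ : ContDiff ℝ (⊤ : ℕ∞) fun x ↦ Q.eval x := by
    simpa only [Polynomial.coe_aeval_eq_eval] using Q.contDiff_aeval (𝕜 := ℝ) (⊤ : ℕ∞)
  have hQg : ∀ x, x ≠ 0 → ContDiffAt ℝ (⊤ : ℕ∞) (fun x ↦ Q.eval (angular g x)) x := fun x hx ↦
    hQ.contDiffAt.comp x (contDiffAt_angular hp hg hx)
  have hcone : ContDiff ℝ (⊤ : ℕ∞) fun x : E2 ↦
      expNegInvGlue (‖x‖ ^ 2) * (angular g x - c + Q.eval (angular g x)) :=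
    contDiff_expNegInvGlue_norm_sq_mul (fun t ht x ↦ by rw [angular_smul g ht]) fun x hx ↦
      ((contDiffAt_angular hp hg hx).sub contDiffAt_const).add (hQg x hx)
  have htwist : ContDiff ℝ (⊤ : ℕ∞) fun x : E2 ↦
      (‖x‖ ^ 2) ^ m * (expNegInvGlue (‖x‖ ^ 2) * Q.eval (angular g x)) :=
    ((contDiff_norm_sq ℝ).pow m).mul
      (contDiff_expNegInvGlue_norm_sq_mul (fun t ht x ↦ by rw [angular_smul g ht]) hQg)
  have hsum : coneExt g Q c m = fun x ↦ c + Real.exp 1 *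
      (expNegInvGlue (‖x‖ ^ 2) * (angular g x - c + Q.eval (angular g x)) -
        (‖x‖ ^ 2) ^ m * (expNegInvGlue (‖x‖ ^ 2) * Q.eval (angular g x))) := by
    ext x
    rw [coneExt]
    ring
  rw [hsum]
  exact contDiff_const.add (contDiff_const.mul (hcone.sub htwist))

lemma coneExt_smul_sphPt (hp : Function.Periodic g (2 * Real.pi)) {r : ℝ} (hr : 0 < r) (t : ℝ) :
    coneExt g Q c m (r • sphPt t) =
      c + Real.exp (1 - (r ^ 2)⁻¹) * (g t - c + (1 - (r ^ 2) ^ m) * Q.eval (g t)) := by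
  rw [coneExt, angular_smul_sphPt hp hr, norm_smul, norm_sphPt, mul_one, Real.norm_of_nonneg hr.le,
    expNegInvGlue, if_neg (not_le.2 (by positivity : 0 < r ^ 2)), sub_eq_add_neg 1 (r ^ 2)⁻¹,
    Real.exp_add]
  ring

lemma coneExt_sphPt (hp : Function.Periodic g (2 * Real.pi)) (t : ℝ) :
    coneExt g Q c m (sphPt t) = g t := by
  simpa using coneExt_smul_sphPt (Q := Q) (c := c) (m := m) hp one_pos t

lemma fderiv_coneExt_tangential (hp : Function.Periodic g (2 * Real.pi))
    (hg : ContDiff ℝ (⊤ : ℕ∞) g) {r : ℝ} (hr : 0 < r) (t : ℝ) :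
    fderiv ℝ (coneExt g Q c m) (r • sphPt t) (r • sphPt (t + Real.pi / 2)) =
      Real.exp (1 - (r ^ 2)⁻¹) * (1 + (1 - (r ^ 2) ^ m) * Q.derivative.eval (g t)) *
        deriv g t := by
  have hcircle : HasDerivAt (fun s ↦ coneExt g Q c m (r • sphPt s))
      (fderiv ℝ (coneExt g Q c m) (r • sphPt t) (r • sphPt (t + Real.pi / 2))) t :=
    ((contDiff_coneExt hp hg).differentiable (by simp) _).hasFDerivAt.comp_hasDerivAt t
      ((hasDerivAt_sphPt t).const_smul r)
  have hgt : HasDerivAt g (deriv g t) t := (hg.differentiable (by simp) t).hasDerivAt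
  rw [funext fun s ↦ coneExt_smul_sphPt hp hr s] at hcircle
  rw [hcircle.unique ((((hgt.sub_const c).add (((Q.hasDerivAt (g t)).comp t hgt).const_mul
    (1 - (r ^ 2) ^ m))).const_mul (Real.exp (1 - (r ^ 2)⁻¹))).const_add c)]
  ring

lemma fderiv_coneExt_radial (hp : Function.Periodic g (2 * Real.pi))
    (hg : ContDiff ℝ (⊤ : ℕ∞) g) {r : ℝ} (hr : 0 < r) (t : ℝ) :
    fderiv ℝ (coneExt g Q c m) (r • sphPt t) (sphPt t) =
      Real.exp (1 - (r ^ 2)⁻¹) * (2 / r ^ 3) *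
        (g t - c + Q.eval (g t) * (1 - (r ^ 2) ^ m * (1 + m * r ^ 2))) := by
  have hray : HasDerivAt (fun s : ℝ ↦ coneExt g Q c m (s • sphPt t))
      (fderiv ℝ (coneExt g Q c m) (r • sphPt t) (sphPt t)) r := by
    have := (hasDerivAt_id r).smul_const (sphPt t)
    rw [one_smul] at this
    exact ((contDiff_coneExt hp hg).differentiable (by simp) _).hasFDerivAt.comp_hasDerivAt r this
  have hpolar : (fun s : ℝ ↦ coneExt g Q c m (s • sphPt t)) =ᶠ[nhds r] fun s ↦
      c + Real.exp (1 - (s ^ 2)⁻¹) * (g t - c + (1 - (s ^ 2) ^ m) * Q.eval (g t)) := by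
    filter_upwards [lt_mem_nhds hr] with s hs using coneExt_smul_sphPt hp hs t
  have hsq : HasDerivAt (fun s : ℝ ↦ s ^ 2) (2 * r) r := by simpa using hasDerivAt_pow 2 r
  have hexp := ((hsq.fun_inv (pow_ne_zero 2 hr.ne')).const_sub 1).exp
  have htwist := (((hsq.fun_pow m).const_sub 1).mul_const (Q.eval (g t))).const_add (g t - c)
  rw [hray.unique (((hexp.mul htwist).const_add c).congr_of_eventuallyEq hpolar)]
  rcases m with _ | k
  · field_simp
    simp
  · push_cast
    field_simp
    ring

lemma deriv_eq_zero_of_fderiv_coneExt_eq_zero (hp : Function.Periodic g (2 * Real.pi))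
    (hg : ContDiff ℝ (⊤ : ℕ∞) g) (hQ : ∀ t, |Q.derivative.eval (g t)| < 1) {r : ℝ} (hr : 0 < r)
    (hr1 : r ≤ 1) {t : ℝ} (h : fderiv ℝ (coneExt g Q c m) (r • sphPt t) = 0) : deriv g t = 0 := by
  have htan := fderiv_coneExt_tangential (Q := Q) (c := c) (m := m) hp hg hr t
  rw [h, zero_apply] at htan
  refine (mul_eq_zero.1 htan.symm).resolve_left (mul_pos (Real.exp_pos _) ?_).ne'
  have hpow : (r ^ 2) ^ m ≤ 1 := pow_le_one₀ (by positivity) (pow_le_one₀ hr.le hr1)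
  have hpow0 : 0 < (r ^ 2) ^ m := by positivity
  nlinarith [(abs_lt.1 (hQ t)).1]

end ConeExt

namespace Ribbon

variable {n : ℕ} (a : Ribbon n)

/-- The nodes over which the cone with apex at height `c` has the wrong radial derivative, so that
any extension resembling this cone has to turn around on the way to them. -/
def turning (c : ℝ) : Finset (Fin n) :=
  {i | 0 < a.curv i * (a.ν i * (a.g (a.θ i) - c))}

lemma curv_mul_nu_mul_neg_of_notMem_turning {c : ℝ} (hc : ∀ i, a.g (a.θ i) ≠ c) {i : Fin n}
    (hi : i ∉ a.turning c) : a.curv i * (a.ν i * (a.g (a.θ i) - c)) < 0 := by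
  have hν : (a.ν i : ℝ) ≠ 0 := by rcases a.nu_sign i with h | h <;> simp [h]
  exact lt_of_le_of_ne (by simpa [turning] using hi)
    (mul_ne_zero (a.curv_ne_zero i) (mul_ne_zero hν (sub_ne_zero.2 (hc i))))

/-- `Q`, `ε` and `m` correct the cone over `a` with apex at height `c` exactly at the turning
nodes: `m` is large enough to reverse the radial derivative on the circle, and `Q` is flat enough
not to create critical points of the restrictions to concentric circles. -/
structure IsTwist (c : ℝ) (Q : Polynomial ℝ) (ε : ℝ) (m : ℕ) : Prop where
  pos : 0 < ε
  one_lt_mul : 1 < ε * m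
  abs_deriv_lt : ∀ t, |Q.derivative.eval (a.g t)| < 1
  eval_of_mem : ∀ i ∈ a.turning c, Q.eval (a.g (a.θ i)) = ε * (a.g (a.θ i) - c)
  eval_of_notMem : ∀ i ∉ a.turning c, Q.eval (a.g (a.θ i)) = 0

lemma exists_isTwist (c : ℝ) : ∃ Q ε m, a.IsTwist c Q ε m := by
  classical
  obtain ⟨ε, hε, Q, hQ, hQ'⟩ := exists_small_interpolation
    (v := fun i ↦ a.g (a.θ i)) (fun i j h ↦ a.values_distinct i j h)
    (fun i ↦ if i ∈ a.turning c then a.g (a.θ i) - c else 0)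
    (a.periodic_g.compact_of_continuous Real.two_pi_pos.ne' a.differentiable_g.continuous)
  obtain ⟨m, hm⟩ := exists_nat_gt (1 / ε)
  exact ⟨Q, ε, m, hε, by rwa [div_lt_iff₀' hε] at hm, fun t ↦ hQ' _ (Set.mem_range_self t),
    fun i hi ↦ by rw [hQ, if_pos hi], fun i hi ↦ by rw [hQ, if_neg hi, mul_zero]⟩

variable {a}

namespace IsTwist

variable {c : ℝ} {Q : Polynomial ℝ} {ε : ℝ} {m : ℕ}

lemma exists_node (h : a.IsTwist c Q ε m) {x : E2} (hx : x ≠ 0) (hx1 : ‖x‖ ≤ 1)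
    (h0 : fderiv ℝ (coneExt a.g Q c m) x = 0) : ∃ i, x = ‖x‖ • sphPt (a.θ i) := by
  obtain ⟨t, ht, hxt⟩ := exists_eq_norm_smul_sphPt hx 0
  rw [zero_add] at ht
  rw [hxt] at h0
  obtain ⟨i, rfl⟩ := a.crit_only t ht (deriv_eq_zero_of_fderiv_coneExt_eq_zero a.periodic_g
    a.smooth_g h.abs_deriv_lt (norm_pos_iff.2 hx) hx1 h0)
  exact ⟨i, hxt⟩

lemma curv_mul_nu_mul_fderiv_neg (h : a.IsTwist c Q ε m) (hc : ∀ i, a.g (a.θ i) ≠ c) (i : Fin n) :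
    a.curv i * (a.ν i * fderiv ℝ (coneExt a.g Q c m) (sphPt (a.θ i)) (sphPt (a.θ i))) < 0 := by
  have hrad := fderiv_coneExt_radial (Q := Q) (c := c) (m := m) a.periodic_g a.smooth_g
    one_pos (a.θ i)
  rw [one_smul] at hrad
  rw [hrad]
  by_cases hi : i ∈ a.turning c
  · have hpos : 0 < a.curv i * (a.ν i * (a.g (a.θ i) - c)) := by simpa [turning] using hi
    rw [h.eval_of_mem i hi]
    have := mul_neg_of_pos_of_neg hpos (sub_neg.2 h.one_lt_mul)
    simp only [one_pow, inv_one, sub_self, Real.exp_zero, div_one, one_mul, mul_one,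
      sub_add_cancel_left, mul_neg]
    linarith
  · have := a.curv_mul_nu_mul_neg_of_notMem_turning hc hi
    rw [h.eval_of_notMem i hi]
    simp only [one_pow, inv_one, sub_self, Real.exp_zero, div_one, one_mul, mul_one,
      sub_add_cancel_left, mul_neg, zero_mul, neg_zero, add_zero]
    linarith

lemma isExtension_coneExt (h : a.IsTwist c Q ε m) (hc : ∀ i, a.g (a.θ i) ≠ c) :
    IsExtension a (coneExt a.g Q c m) := by
  refine isExtension_iff.2 ⟨contDiff_coneExt a.periodic_g a.smooth_g, coneExt_sphPt a.periodic_g,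
    fun x hx h0 ↦ ?_, h.curv_mul_nu_mul_fderiv_neg hc⟩
  have hx1 : ‖x‖ = 1 := mem_sphere_zero_iff_norm.1 hx
  obtain ⟨i, hi⟩ := h.exists_node (norm_ne_zero_iff.1 (by simp [hx1])) hx1.le h0
  rw [hx1, one_smul] at hi
  have := h.curv_mul_nu_mul_fderiv_neg hc i
  rw [← hi, h0] at this
  simp at this

lemma mem_turning_and_pow_mul_eq (h : a.IsTwist c Q ε m) (hc : ∀ i, a.g (a.θ i) ≠ c) {r : ℝ}
    (hr : 0 < r) {i : Fin n} (h0 : fderiv ℝ (coneExt a.g Q c m) (r • sphPt (a.θ i)) = 0) :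
    i ∈ a.turning c ∧ (r ^ 2) ^ m * (1 + m * r ^ 2) = 1 + ε⁻¹ := by
  have hrad := fderiv_coneExt_radial (Q := Q) (c := c) (m := m) a.periodic_g a.smooth_g hr (a.θ i)
  rw [h0, zero_apply] at hrad
  have hbal := (mul_eq_zero.1 hrad.symm).resolve_left (by positivity)
  have hv : a.g (a.θ i) - c ≠ 0 := sub_ne_zero.2 (hc i)
  by_cases hi : i ∈ a.turning c
  · rw [h.eval_of_mem i hi] at hbal
    refine ⟨hi, ?_⟩
    have hε := h.pos.ne'
    have : 1 + ε * (1 - (r ^ 2) ^ m * (1 + m * r ^ 2)) = 0 :=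
      (mul_eq_zero.1 (by linear_combination hbal :
        (a.g (a.θ i) - c) * (1 + ε * (1 - (r ^ 2) ^ m * (1 + m * r ^ 2))) = 0)).resolve_left hv
    field_simp
    linarith
  · rw [h.eval_of_notMem i hi, zero_mul, add_zero] at hbal
    exact absurd hbal hv

lemma exists_mem_turning (h : a.IsTwist c Q ε m) (hc : ∀ i, a.g (a.θ i) ≠ c) {x : E2}
    (hx : x ∈ critPts (coneExt a.g Q c m)) (hx0 : x ≠ 0) : ∃ i ∈ a.turning c,
      x = ‖x‖ • sphPt (a.θ i) ∧ (‖x‖ ^ 2) ^ m * (1 + m * ‖x‖ ^ 2) = 1 + ε⁻¹ := by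
  obtain ⟨hx1, hcrit⟩ := hx
  obtain ⟨i, hi⟩ := h.exists_node hx0 (mem_ball_zero_iff.1 hx1).le hcrit
  rw [hi] at hcrit
  obtain ⟨hiW, heq⟩ := h.mem_turning_and_pow_mul_eq hc (norm_pos_iff.2 hx0) hcrit
  exact ⟨i, hiW, hi, heq⟩

-- By monotonicity in the radius, all critical points other than the origin have the same norm.
lemma encard_critPts_coneExt_le (h : a.IsTwist c Q ε m) (hc : ∀ i, a.g (a.θ i) ≠ c) :
    (critPts (coneExt a.g Q c m)).encard ≤ 1 + (a.turning c).card := by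
  have hm : m ≠ 0 := by
    rintro rfl
    simpa using zero_lt_one.trans h.one_lt_mul
  rcases (critPts (coneExt a.g Q c m) \ {0}).eq_empty_or_nonempty with hemp | ⟨y, hy, hy0⟩
  · calc (critPts (coneExt a.g Q c m)).encard ≤ ({0} : Set E2).encard :=
          Set.encard_le_encard (Set.sdiff_eq_empty.1 hemp)
      _ ≤ 1 + (a.turning c).card := by simp
  · have hsub : critPts (coneExt a.g Q c m) ⊆
        insert 0 ((fun i ↦ ‖y‖ • sphPt (a.θ i)) '' a.turning c) := by
      intro x hx
      rcases eq_or_ne x 0 with rfl | hx0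
      · exact Set.mem_insert _ _
      · obtain ⟨i, hi, hxi, hxeq⟩ := h.exists_mem_turning hc hx hx0
        obtain ⟨-, -, -, hyeq⟩ := h.exists_mem_turning hc hy hy0
        have hxy : ‖x‖ = ‖y‖ := (pow_left_inj₀ (norm_nonneg x) (norm_nonneg y) two_ne_zero).1 <|
          (strictMonoOn_pow_mul_one_add_mul hm).injOn (sq_nonneg ‖x‖) (sq_nonneg ‖y‖)
            (hxeq.trans hyeq.symm)
        exact Or.inr ⟨i, hi, hxy ▸ hxi.symm⟩
    calc (critPts (coneExt a.g Q c m)).encard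
        ≤ ((fun i ↦ ‖y‖ • sphPt (a.θ i)) '' a.turning c).encard + 1 :=
          (Set.encard_le_encard hsub).trans (Set.encard_insert_le _ _)
      _ ≤ (a.turning c : Set (Fin n)).encard + 1 := by gcongr; exact Set.encard_image_le _ _
      _ = 1 + (a.turning c).card := by rw [Set.encard_coe_eq_coe_finsetCard, add_comm]

end IsTwist

theorem exists_isExtension_encard_critPts_le {c : ℝ} (hc : ∀ i, a.g (a.θ i) ≠ c) :
    ∃ f, IsExtension a f ∧ (critPts f).encard ≤ 1 + (a.turning c).card := by
  obtain ⟨Q, ε, m, h⟩ := a.exists_isTwist c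
  exact ⟨_, h.isExtension_coneExt hc, h.encard_critPts_coneExt_le hc⟩

end Ribbon

/-! ### Ribbons with two positive nodes -/

lemma fderiv_angular_radial (g : ℝ → ℝ) (x : E2) : fderiv ℝ (angular g) x x = 0 := by
  by_cases hd : DifferentiableAt ℝ (angular g) x
  · have hray : HasDerivAt (fun s : ℝ ↦ angular g (s • x)) (fderiv ℝ (angular g) x x) 1 := by
      have hsmul : HasDerivAt (fun s : ℝ ↦ s • x) x 1 := by
        simpa using (hasDerivAt_id (1 : ℝ)).smul_const x
      exact hd.hasFDerivAt.comp_hasDerivAt_of_eq 1 hsmul (one_smul ℝ x).symm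
    refine hray.unique ((hasDerivAt_const 1 (angular g x)).congr_of_eventuallyEq ?_)
    filter_upwards [lt_mem_nhds zero_lt_one] with s hs using angular_smul g hs x
  · rw [fderiv_zero_of_not_differentiableAt hd, zero_apply]

lemma fderiv_angular_vertical {g : ℝ → ℝ} (hp : Function.Periodic g (2 * Real.pi))
    (hg : ContDiff ℝ (⊤ : ℕ∞) g) {r : ℝ} (hr : 0 < r) (t : ℝ) :
    fderiv ℝ (angular g) (r • sphPt t) (EuclideanSpace.single 1 1) =
      Real.cos t * deriv g t / r := by
  have hx : r • sphPt t ≠ 0 := smul_ne_zero hr.ne' (sphPt_ne_zero t)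
  have hd : DifferentiableAt ℝ (angular g) (r • sphPt t) :=
    (contDiffAt_angular hp hg hx).differentiableAt (by simp)
  have hcircle : HasDerivAt (fun s ↦ angular g (r • sphPt s))
      (fderiv ℝ (angular g) (r • sphPt t) (r • sphPt (t + Real.pi / 2))) t :=
    hd.hasFDerivAt.comp_hasDerivAt (f := fun s ↦ r • sphPt s) t ((hasDerivAt_sphPt t).const_smul r)
  rw [funext fun s ↦ angular_smul_sphPt hp hr s] at hcircle
  have htan := hcircle.unique (hg.differentiable (by simp) t).hasDerivAt
  have hdecomp : EuclideanSpace.single (1 : Fin 2) (1 : ℝ) =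
      (Real.sin t / r) • r • sphPt t + (Real.cos t / r) • r • sphPt (t + Real.pi / 2) := by
    ext i
    fin_cases i
    · simp only [Fin.isValue, Fin.zero_eta, ne_eq, zero_ne_one, not_false_eq_true,
        PiLp.single_eq_of_ne, PiLp.add_apply, PiLp.smul_apply, sphPt_zero, smul_eq_mul,
        Real.cos_add_pi_div_two, mul_neg]
      field_simp
      ring
    · simp only [Fin.isValue, Fin.mk_one, PiLp.single_eq_same, PiLp.add_apply, PiLp.smul_apply,
        sphPt_one, smul_eq_mul, Real.sin_add_pi_div_two]
      field_simp
      linarith [Real.sin_sq_add_cos_sq t]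
  rw [hdecomp, map_add, map_smul _ (Real.sin t / r), map_smul _ (Real.cos t / r),
    fderiv_angular_radial, htan, smul_zero, zero_add, smul_eq_mul]
  ring

/-- The function on the strip `|z 0| < 1` that interpolates `h` linearly between the two
endpoints of each vertical chord of the unit circle. -/
def chordInterp (h : ℝ → ℝ) (z : E2) : ℝ :=
  (h (Real.arccos (z 0)) + h (-Real.arccos (z 0))) / 2 +
    z 1 * ((h (Real.arccos (z 0)) - h (-Real.arccos (z 0))) / (2 * Real.sin (Real.arccos (z 0))))

/-- Glues the chordwise interpolation of `h` near the vertical axis to the cone over `h` near the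
points `±1` by means of a cutoff function `w`. -/
def verticalExt (h : ℝ → ℝ) (w : ContDiffBump (0 : ℝ)) (z : E2) : ℝ :=
  w (z 0) * chordInterp h z + (1 - w (z 0)) * angular h z

section VerticalExt

lemma arccos_mem_Ioo {x : ℝ} (hx : |x| < 1) : Real.arccos x ∈ Set.Ioo 0 Real.pi :=
  ⟨Real.arccos_pos.2 (abs_lt.1 hx).2, by
    have := Real.strictAntiOn_arccos ⟨le_rfl, by norm_num⟩ (abs_le.1 hx.le) (abs_lt.1 hx).1
    rwa [Real.arccos_neg_one] at this⟩

variable {h : ℝ → ℝ} {w : ContDiffBump (0 : ℝ)}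

lemma contDiffAt_chordInterp (hs : ContDiff ℝ (⊤ : ℕ∞) h) {z : E2} (hz : |z 0| < 1) :
    ContDiffAt ℝ (⊤ : ℕ∞) (chordInterp h) z := by
  have hcoord (i : Fin 2) : ContDiffAt ℝ (⊤ : ℕ∞) (fun z : E2 ↦ z i) z :=
    (EuclideanSpace.proj (𝕜 := ℝ) i).contDiff.contDiffAt
  have hA : ContDiffAt ℝ (⊤ : ℕ∞) (fun z : E2 ↦ Real.arccos (z 0)) z :=
    ContDiffAt.comp (g := Real.arccos) z
      (Real.contDiffAt_arccos (abs_lt.1 hz).1.ne' (abs_lt.1 hz).2.ne) (hcoord 0)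
  have hup := hs.contDiffAt.comp z hA
  have hdown := hs.contDiffAt.comp z hA.neg
  have hsin := Real.contDiff_sin.contDiffAt.comp z hA
  exact ((hup.add hdown).div_const 2).add ((hcoord 1).mul ((hup.sub hdown).div
    (contDiffAt_const.mul hsin)
    (mul_pos two_pos (Real.sin_pos_of_mem_Ioo (arccos_mem_Ioo hz))).ne'))

lemma contDiff_verticalExt (hp : Function.Periodic h (2 * Real.pi)) (hs : ContDiff ℝ (⊤ : ℕ∞) h)
    (hw : w.rOut < 1) : ContDiff ℝ (⊤ : ℕ∞) (verticalExt h w) := by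
  have hcoord : ContDiff ℝ (⊤ : ℕ∞) (fun z : E2 ↦ z 0) :=
    (EuclideanSpace.proj (𝕜 := ℝ) (0 : Fin 2)).contDiff
  have hwz : ContDiff ℝ (⊤ : ℕ∞) fun z : E2 ↦ w (z 0) := w.contDiff.comp hcoord
  refine contDiff_iff_contDiffAt.2 fun z ↦ ContDiffAt.add ?_ ?_
  · rcases lt_or_ge |z 0| 1 with hz | hz
    · exact hwz.contDiffAt.mul (contDiffAt_chordInterp hs hz)
    · refine (contDiffAt_const (c := (0 : ℝ))).congr_of_eventuallyEq ?_
      filter_upwards [hcoord.continuous.abs.continuousAt.eventually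
        (lt_mem_nhds (hw.trans_le hz))] with y hy
      rw [w.zero_of_le_dist (by simpa using hy.le), zero_mul]
  · rcases eq_or_ne z 0 with rfl | hz
    · refine (contDiffAt_const (c := (0 : ℝ))).congr_of_eventuallyEq ?_
      filter_upwards [hcoord.continuous.continuousAt.eventually w.eventuallyEq_one] with y hy
      rw [hy, Pi.one_apply, sub_self, zero_mul]
    · exact (contDiffAt_const.sub hwz.contDiffAt).mul (contDiffAt_angular hp hs hz)

lemma chordInterp_sphPt (hp : Function.Periodic h (2 * Real.pi)) {t : ℝ}
    (ht : |Real.cos t| < 1) : chordInterp h (sphPt t) = h t := by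
  rw [chordInterp, sphPt_zero, sphPt_one]
  set A := Real.arccos (Real.cos t)
  have hsin : Real.sin A ≠ 0 := (Real.sin_pos_of_mem_Ioo (arccos_mem_Ioo ht)).ne'
  have hcos : Real.cos A = Real.cos t := Real.cos_arccos (Real.neg_one_le_cos t) (Real.cos_le_one t)
  obtain ⟨k, hk | hk⟩ := Real.cos_eq_cos_iff.1 hcos
  · have hht : h t = h A := by
      rw [hk, add_comm, show 2 * (k : ℝ) * Real.pi = k * (2 * Real.pi) by ring]
      exact hp.int_mul k A
    have hst : Real.sin t = Real.sin A := by
      rw [hk, add_comm, show 2 * (k : ℝ) * Real.pi = k * (2 * Real.pi) by ring]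
      exact Real.sin_periodic.int_mul k A
    rw [hst, hht]
    field_simp
    ring
  · have hht : h t = h (-A) := by
      rw [hk, sub_eq_neg_add, show 2 * (k : ℝ) * Real.pi = k * (2 * Real.pi) by ring]
      exact hp.int_mul k (-A)
    have hst : Real.sin t = -Real.sin A := by
      rw [hk, sub_eq_neg_add, show 2 * (k : ℝ) * Real.pi = k * (2 * Real.pi) by ring,
        ← Real.sin_neg]
      exact Real.sin_periodic.int_mul k (-A)
    rw [hst, hht]
    field_simp
    ring

lemma verticalExt_sphPt (hp : Function.Periodic h (2 * Real.pi)) (hw : w.rOut < 1) (t : ℝ) :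
    verticalExt h w (sphPt t) = h t := by
  have hang : angular h (sphPt t) = h t := by simpa using angular_smul_sphPt hp one_pos t
  rw [verticalExt, hang, sphPt_zero]
  rcases lt_or_ge |Real.cos t| 1 with ht | ht
  · rw [chordInterp_sphPt hp ht]
    ring
  · rw [w.zero_of_le_dist (by simpa using hw.le.trans ht)]
    ring

lemma hasLineDerivAt_chordInterp (h : ℝ → ℝ) (z : E2) :
    HasLineDerivAt ℝ (chordInterp h) ((h (Real.arccos (z 0)) - h (-Real.arccos (z 0))) /
      (2 * Real.sin (Real.arccos (z 0)))) z (EuclideanSpace.single 1 1) := by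
  have hlin : HasDerivAt (fun s : ℝ ↦ z 1 + s) 1 0 := (hasDerivAt_id 0).const_add (z 1)
  simpa [HasLineDerivAt, chordInterp] using
    (hlin.mul_const ((h (Real.arccos (z 0)) - h (-Real.arccos (z 0))) /
      (2 * Real.sin (Real.arccos (z 0))))).const_add
    ((h (Real.arccos (z 0)) + h (-Real.arccos (z 0))) / 2)

lemma norm_pos_of_abs_apply_pos {z : E2} {i : Fin 2} (hz : 0 < |z i|) : 0 < ‖z‖ :=
  hz.trans_le (PiLp.norm_apply_le z i)

-- The cutoff depends on `z 0` only, so it does not contribute to the vertical derivative.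
lemma fderiv_verticalExt_vertical (hp : Function.Periodic h (2 * Real.pi))
    (hs : ContDiff ℝ (⊤ : ℕ∞) h) (hw : w.rOut < 1) (z : E2) :
    fderiv ℝ (verticalExt h w) z (EuclideanSpace.single 1 1) =
      w (z 0) * ((h (Real.arccos (z 0)) - h (-Real.arccos (z 0))) /
        (2 * Real.sin (Real.arccos (z 0)))) +
      (1 - w (z 0)) * fderiv ℝ (angular h) z (EuclideanSpace.single 1 1) := by
  set J : E2 := EuclideanSpace.single 1 1 with hJ
  have hang : HasDerivAt (fun s : ℝ ↦ (1 - w (z 0)) * angular h (z + s • J))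
      ((1 - w (z 0)) * fderiv ℝ (angular h) z J) 0 := by
    rcases eq_or_ne z 0 with rfl | hz
    · have h1 : w ((0 : E2) 0) = 1 := w.eventuallyEq_one.self_of_nhds
      simpa only [h1, sub_self, zero_mul] using hasDerivAt_const (0 : ℝ) (0 : ℝ)
    · have hd := (contDiffAt_angular hp hs hz).differentiableAt (by simp)
      exact (hd.hasFDerivAt.hasLineDerivAt J).const_mul _
  have hsum : HasLineDerivAt ℝ (verticalExt h w) _ z J :=
    (((hasLineDerivAt_chordInterp h z).const_mul (w (z 0))).add hang).congr_of_eventuallyEq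
      (Filter.Eventually.of_forall fun s ↦ by simp [verticalExt, hJ])
  have hd := (contDiff_verticalExt hp hs hw).differentiable (by simp) z
  exact (hd.hasFDerivAt.hasLineDerivAt J).unique hsum

lemma fderiv_verticalExt_pos (hp : Function.Periodic h (2 * Real.pi)) (hs : ContDiff ℝ (⊤ : ℕ∞) h)
    (hw : w.rOut < 1) (hodd : ∀ t ∈ Set.Ioo 0 Real.pi, h (-t) < h t)
    (hcos : ∀ t, w.rIn < |Real.cos t| → 0 < Real.cos t * deriv h t) {z : E2} (hz : ‖z‖ ≤ 1) :
    0 < fderiv ℝ (verticalExt h w) z (EuclideanSpace.single 1 1) := by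
  have hchord (hz0 : |z 0| < 1) : 0 < (h (Real.arccos (z 0)) - h (-Real.arccos (z 0))) /
      (2 * Real.sin (Real.arccos (z 0))) := by
    have hA := arccos_mem_Ioo hz0
    exact div_pos (sub_pos.2 (hodd _ hA)) (mul_pos two_pos (Real.sin_pos_of_mem_Ioo hA))
  have hang (hz0 : w.rIn < |z 0|) :
      0 < fderiv ℝ (angular h) z (EuclideanSpace.single 1 1) := by
    have hzpos : 0 < ‖z‖ := norm_pos_of_abs_apply_pos (w.rIn_pos.trans hz0)
    obtain ⟨t, -, ht⟩ := exists_eq_norm_smul_sphPt (norm_pos_iff.1 hzpos) 0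
    have hle : |z 0| ≤ |Real.cos t| := by
      have : z 0 = ‖z‖ * Real.cos t := by
        conv_lhs => rw [ht]
        simp [sphPt_zero]
      rw [this, abs_mul, abs_norm]
      exact mul_le_of_le_one_left (abs_nonneg _) hz
    rw [ht, fderiv_angular_vertical hp hs hzpos]
    exact div_pos (hcos t (hz0.trans_le hle)) hzpos
  rw [fderiv_verticalExt_vertical hp hs hw]
  rcases le_or_gt |z 0| w.rIn with hin | hin
  · rw [w.one_of_mem_closedBall (by simpa using hin), one_mul, sub_self, zero_mul, add_zero]
    exact hchord (hin.trans_lt (w.rIn_lt_rOut.trans hw))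
  · rcases lt_or_ge |z 0| 1 with hlt | hge
    · rcases (w.nonneg (x := z 0)).eq_or_lt with h0 | h0
      · simpa [← h0] using hang hin
      · exact add_pos_of_pos_of_nonneg (mul_pos h0 (hchord hlt))
          (mul_nonneg (sub_nonneg.2 w.le_one) (hang hin).le)
    · rw [w.zero_of_le_dist (by simpa using hw.le.trans hge), zero_mul, sub_zero, one_mul, zero_add]
      exact hang hin

end VerticalExt

lemma abs_lt_of_abs_cos_lt {d t : ℝ} (hd : d ∈ Set.Ioo 0 Real.pi) (ht : |t| ≤ d)
    (hcos : |Real.cos d| < |Real.cos t|) : |t| < d ∧ 0 < Real.cos t := by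
  have hle : Real.cos d ≤ Real.cos t := by
    rw [← Real.cos_abs t]
    exact Real.cos_le_cos_of_nonneg_of_le_pi (abs_nonneg t) hd.2.le ht
  refine ⟨ht.lt_of_ne fun h ↦ ?_, ?_⟩
  · rw [← Real.cos_abs t, h] at hcos
    exact hcos.ne rfl
  · rcases abs_cases (Real.cos t) with h | h <;> linarith [neg_abs_le (Real.cos d)]

lemma cos_mul_deriv_pos {h : ℝ → ℝ} (hp : Function.Periodic h (2 * Real.pi)) {d : ℝ}
    (hd : d ∈ Set.Ioo 0 Real.pi) (hpos : ∀ t ∈ Set.Ioo (-d) d, 0 < deriv h t)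
    (hneg : ∀ t ∈ Set.Ioo d (2 * Real.pi - d), deriv h t < 0) {t : ℝ}
    (ht : |Real.cos d| < |Real.cos t|) : 0 < Real.cos t * deriv h t := by
  obtain ⟨s, hs, hst⟩ : ∃ s ∈ Set.Ico (-d) (-d + 2 * Real.pi),
      (Real.cos t, deriv h t) = (Real.cos s, deriv h s) :=
    Function.Periodic.exists_mem_Ico (f := fun x ↦ (Real.cos x, deriv h x))
      (fun x ↦ Prod.ext (Real.cos_periodic x) (periodic_deriv hp x)) Real.two_pi_pos t (-d)
  rw [Prod.mk.injEq] at hst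
  rw [hst.1] at ht
  rw [hst.1, hst.2]
  rcases le_or_gt s d with hsd | hsd
  · obtain ⟨hlt, hcos⟩ := abs_lt_of_abs_cos_lt hd (abs_le.2 ⟨hs.1, hsd⟩) ht
    exact mul_pos hcos (hpos s (abs_lt.1 hlt))
  · rw [← abs_neg (Real.cos d), ← Real.cos_pi_sub, ← abs_neg (Real.cos s), ← Real.cos_sub_pi] at ht
    obtain ⟨-, hcos⟩ := abs_lt_of_abs_cos_lt (d := Real.pi - d) (t := s - Real.pi)
      ⟨by linarith [hd.2], by linarith [hd.1]⟩
      (abs_le.2 ⟨by linarith, by linarith [hs.2]⟩) ht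
    rw [Real.cos_sub_pi, neg_pos] at hcos
    exact mul_pos_of_neg_of_neg hcos (hneg s ⟨hsd, by linarith [hs.2]⟩)

lemma apply_neg_lt_of_deriv {h : ℝ → ℝ} (hp : Function.Periodic h (2 * Real.pi))
    (hc : Continuous h) {d : ℝ} (hpos : ∀ t ∈ Set.Ioo (-d) d, 0 < deriv h t)
    (hneg : ∀ t ∈ Set.Ioo d (2 * Real.pi - d), deriv h t < 0) {t : ℝ}
    (ht : t ∈ Set.Ioo 0 Real.pi) : h (-t) < h t := by
  rcases le_or_gt t d with htd | htd
  · have hmono := strictMonoOn_of_deriv_pos (convex_Icc (-d) d) hc.continuousOn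
      (by rwa [interior_Icc])
    exact hmono ⟨by linarith, by linarith [ht.1]⟩ ⟨by linarith [ht.1], htd⟩ (by linarith [ht.1])
  · have hanti := strictAntiOn_of_deriv_neg (convex_Icc d (2 * Real.pi - d)) hc.continuousOn
      (by rwa [interior_Icc])
    rw [← hp (-t)]
    exact hanti ⟨htd.le, by linarith [ht.2]⟩ ⟨by linarith [ht.2], by linarith⟩ (by linarith [ht.2])

theorem exists_contDiff_fderiv_vertical_pos {h : ℝ → ℝ} (hp : Function.Periodic h (2 * Real.pi))
    (hs : ContDiff ℝ (⊤ : ℕ∞) h) {d : ℝ} (hd : d ∈ Set.Ioo 0 Real.pi)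
    (hpos : ∀ t ∈ Set.Ioo (-d) d, 0 < deriv h t)
    (hneg : ∀ t ∈ Set.Ioo d (2 * Real.pi - d), deriv h t < 0) :
    ∃ f : E2 → ℝ, ContDiff ℝ (⊤ : ℕ∞) f ∧ (∀ t, f (sphPt t) = h t) ∧
      ∀ z, ‖z‖ ≤ 1 → 0 < fderiv ℝ f z (EuclideanSpace.single 1 1) := by
  have hcosd : |Real.cos d| < 1 := by
    rw [← sq_lt_one_iff_abs_lt_one, Real.cos_sq']
    linarith [pow_pos (Real.sin_pos_of_mem_Ioo hd) 2]
  obtain ⟨R, hR, hR1⟩ := exists_between hcosd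
  obtain ⟨r, hr, hrR⟩ := exists_between hR
  let w : ContDiffBump (0 : ℝ) := ⟨r, R, (abs_nonneg _).trans_lt hr, hrR⟩
  exact ⟨verticalExt h w, contDiff_verticalExt hp hs hR1, verticalExt_sphPt hp hR1,
    fun z hz ↦ fderiv_verticalExt_pos hp hs hR1
      (fun t ht ↦ apply_neg_lt_of_deriv hp hs.continuous hpos hneg ht)
      (fun t ht ↦ cos_mul_deriv_pos hp hd hpos hneg (hr.trans ht)) hz⟩

theorem exists_contDiff_fderiv_sphPt_pos {g : ℝ → ℝ} (hp : Function.Periodic g (2 * Real.pi))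
    (hs : ContDiff ℝ (⊤ : ℕ∞) g) {p q : ℝ} (hpq : p ∈ Set.Ioo q (q + 2 * Real.pi))
    (hpos : ∀ t ∈ Set.Ioo q p, 0 < deriv g t)
    (hneg : ∀ t ∈ Set.Ioo p (q + 2 * Real.pi), deriv g t < 0) :
    ∃ f : E2 → ℝ, ContDiff ℝ (⊤ : ℕ∞) f ∧ (∀ t, f (sphPt t) = g t) ∧
      ∀ z, ‖z‖ ≤ 1 → 0 < fderiv ℝ f z (sphPt ((p + q) / 2 + Real.pi / 2)) := by
  set μ := (p + q) / 2 with hμ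
  have hderiv (t) : deriv (fun t ↦ g (t + μ)) t = deriv g (t + μ) := deriv_comp_add_const ..
  obtain ⟨F, hFs, hFg, hF⟩ := exists_contDiff_fderiv_vertical_pos
    (show Function.Periodic (fun t ↦ g (t + μ)) _ from hp.add_const μ)
    (hs.comp (contDiff_id.add contDiff_const)) (d := (p - q) / 2)
    ⟨by linarith [hpq.1], by linarith [hpq.2]⟩
    (fun t ht ↦ by rw [hderiv]; exact hpos _ ⟨by linarith [ht.1], by linarith [ht.2]⟩)
    (fun t ht ↦ by rw [hderiv]; exact hneg _ ⟨by linarith [ht.1], by linarith [ht.2]⟩)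
  refine ⟨F ∘ rotate (-μ), hFs.comp (rotate (-μ)).contDiff, fun t ↦ ?_, fun z hz ↦ ?_⟩
  · simp [rotate_sphPt, hFg]
  · have hvert : rotate (-μ) (sphPt (μ + Real.pi / 2)) = EuclideanSpace.single 1 1 := by
      rw [rotate_sphPt, add_neg_cancel_comm]
      ext i
      fin_cases i <;> simp [sphPt_zero, sphPt_one]
    have hcomp := (rotate (-μ)).toContinuousLinearEquiv.comp_right_fderiv (f := F) (x := z)
    simp only [LinearIsometryEquiv.coe_toContinuousLinearEquiv] at hcomp
    rw [hcomp]
    simpa [hvert] using hF (rotate (-μ) z) (by simpa using hz)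

lemma fderiv_sphPt_tangent {f : E2 → ℝ} {g : ℝ → ℝ} (hf : Differentiable ℝ f)
    (hfg : ∀ t, f (sphPt t) = g t) (t : ℝ) :
    fderiv ℝ f (sphPt t) (sphPt (t + Real.pi / 2)) = deriv g t := by
  have h := (hf (sphPt t)).hasFDerivAt.comp_hasDerivAt t (hasDerivAt_sphPt t)
  rw [← h.deriv]
  exact congrArg (deriv · t) (funext hfg)

lemma sphPt_add_pi_div_two_eq (s t : ℝ) : sphPt (s + Real.pi / 2) =
    Real.sin (t - s) • sphPt t + Real.cos (t - s) • sphPt (t + Real.pi / 2) := by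
  have h := Real.sin_sq_add_cos_sq t
  ext i
  fin_cases i
  · simp only [Fin.zero_eta, Fin.isValue, sphPt_zero, Real.cos_add_pi_div_two, Real.sin_sub,
      Real.cos_sub, PiLp.add_apply, PiLp.smul_apply, smul_eq_mul, mul_neg]
    linear_combination Real.sin s * h
  · simp only [Fin.mk_one, Fin.isValue, sphPt_one, Real.sin_add_pi_div_two, Real.sin_sub,
      Real.cos_sub, PiLp.add_apply, PiLp.smul_apply, smul_eq_mul]
    linear_combination -Real.cos s * h

lemma fderiv_radial_eq_of_deriv_eq_zero {f : E2 → ℝ} {g : ℝ → ℝ} (hf : Differentiable ℝ f)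
    (hfg : ∀ t, f (sphPt t) = g t) {t : ℝ} (ht : deriv g t = 0) (s : ℝ) :
    fderiv ℝ f (sphPt t) (sphPt (s + Real.pi / 2)) =
      Real.sin (t - s) * fderiv ℝ f (sphPt t) (sphPt t) := by
  rw [sphPt_add_pi_div_two_eq s t, map_add, map_smul, map_smul, fderiv_sphPt_tangent hf hfg, ht,
    smul_zero, add_zero, smul_eq_mul]

namespace Ribbon

variable {n : ℕ} {a : Ribbon n}

lemma exists_deriv_pos_deriv_neg {j : Fin n} (hj : 0 < a.curv j)
    (hrot : finRotate n (finRotate n j) = j) : ∃ k : ℤ, ∃ p,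
      p = a.θ (finRotate n j) + k * (2 * Real.pi) ∧ p ∈ Set.Ioo (a.θ j) (a.θ j + 2 * Real.pi) ∧
      (∀ x ∈ Set.Ioo (a.θ j) p, 0 < deriv a.g x) ∧
      ∀ x ∈ Set.Ioo p (a.θ j + 2 * Real.pi), deriv a.g x < 0 := by
  obtain ⟨k, hqp, hpos, hi⟩ := exists_forall_deriv_pos hj
  obtain ⟨m, hpq, hneg, -⟩ := exists_forall_deriv_neg hi
  rw [hrot] at hpq hneg
  set p := a.θ (finRotate n j) + k * (2 * Real.pi) with hp
  have hneg' (x) (hx : x ∈ Set.Ioo p (a.θ j + (m + k : ℤ) * (2 * Real.pi))) : deriv a.g x < 0 := by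
    rw [← (periodic_deriv a.periodic_g).sub_int_mul_eq k]
    push_cast at hx
    exact hneg _ ⟨by linarith [hx.1], by linarith [hx.2]⟩
  have hcrit (l : ℤ) := a.deriv_eq_zero_add_int_mul j l
  have hp2 : p < a.θ j + 2 * Real.pi := by
    by_contra! hle
    rcases hle.eq_or_lt with h | h
    · have hcurv := a.deriv_deriv_add_int_mul j 1
      rw [Int.cast_one, one_mul, h, hp, a.deriv_deriv_add_int_mul] at hcurv
      exact lt_asymm hj (hcurv ▸ hi)
    · exact (hpos _ ⟨by linarith [Real.pi_pos], h⟩).ne' (by simpa using hcrit 1)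
  have hmk : 1 ≤ m + k := by
    by_contra! hle
    have : ((m + k : ℤ) : ℝ) * (2 * Real.pi) ≤ 0 :=
      mul_nonpos_of_nonpos_of_nonneg (by exact_mod_cast Int.lt_add_one_iff.1 hle)
        Real.two_pi_pos.le
    push_cast at this
    linarith
  refine ⟨k, p, rfl, ⟨hqp, hp2⟩, hpos, fun x hx ↦ hneg' x ⟨hx.1, hx.2.trans_le ?_⟩⟩
  have : (1 : ℝ) ≤ (m + k : ℤ) := by exact_mod_cast hmk
  nlinarith [Real.pi_pos]

theorem exists_isExtension_critPts_eq_empty {j : Fin n} (hj : 0 < a.curv j)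
    (hrot : finRotate n (finRotate n j) = j) (hij : ∀ l, l = finRotate n j ∨ l = j)
    (hν : ∀ l, a.ν l = 1) : ∃ f, IsExtension a f ∧ critPts f = ∅ := by
  obtain ⟨k, p, hp, hpq, hpos, hneg⟩ := exists_deriv_pos_deriv_neg hj hrot
  obtain ⟨f, hfs, hfg, hf⟩ :=
    exists_contDiff_fderiv_sphPt_pos a.periodic_g a.smooth_g hpq hpos hneg
  have hne (z) (hz : ‖z‖ ≤ 1) : fderiv ℝ f z ≠ 0 := fun h0 ↦ by simpa [h0] using hf z hz
  have hrad (t) (ht : deriv a.g t = 0) :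
      0 < Real.sin (t - (p + a.θ j) / 2) * fderiv ℝ f (sphPt t) (sphPt t) := by
    rw [← fderiv_radial_eq_of_deriv_eq_zero (hfs.differentiable (by simp)) hfg ht]
    exact hf _ (norm_sphPt t).le
  have hsin : 0 < Real.sin ((p - a.θ j) / 2) :=
    Real.sin_pos_of_mem_Ioo ⟨by linarith [hpq.1], by linarith [hpq.2]⟩
  refine ⟨f, isExtension_iff.2 ⟨hfs, hfg, fun x hx ↦ hne x (mem_sphere_zero_iff_norm.1 hx).le,
    fun l ↦ ?_⟩, Set.eq_empty_of_forall_notMem fun x hx ↦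
      hne x (mem_ball_zero_iff.1 hx.1).le hx.2⟩
  rw [hν, Int.cast_one, one_mul]
  rcases hij l with rfl | rfl
  · have h := hrad p (hp ▸ a.deriv_eq_zero_add_int_mul _ k)
    rw [show p - (p + a.θ j) / 2 = (p - a.θ j) / 2 by ring, mul_pos_iff_of_pos_left hsin, hp,
      sphPt_periodic.int_mul k] at h
    exact mul_neg_of_neg_of_pos (curv_finRotate_neg hj).1 h
  · have h := hrad (a.θ l) (a.node_crit l)
    rw [show a.θ l - (p + a.θ l) / 2 = -((p - a.θ l) / 2) by ring, Real.sin_neg, neg_mul, neg_pos,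
      ← mul_zero (Real.sin _), mul_lt_mul_iff_right₀ hsin] at h
    exact mul_neg_of_pos_of_neg hj h

end Ribbon

/-! ### The upper bound -/

lemma finRotate_finRotate_ne {n : ℕ} (hn : 2 < n) (i : Fin n) :
    finRotate n (finRotate n i) ≠ i := by
  obtain ⟨m, rfl⟩ : ∃ m, n = m + 1 := Nat.exists_eq_add_one.2 (by omega)
  simp only [ne_eq, Fin.ext_iff, coe_finRotate, Fin.val_last]
  split_ifs <;> omega

namespace Ribbon

variable {n : ℕ} (a : Ribbon n)

/-- The turning nodes that `a` would have for the apex height `c` if all its nodes were positive. -/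
def posTurning (c : ℝ) : Finset (Fin n) :=
  {i | 0 < a.curv i * (a.g (a.θ i) - c)}

lemma card_turning_add_two_mul_card_inter_le (c : ℝ) :
    (a.turning c).card + 2 * (a.posTurning c ∩ a.neg).card ≤
      (a.posTurning c).card + a.neg.card := by
  have hsub : a.turning c ⊆ (a.posTurning c \ a.neg) ∪ (a.neg \ a.posTurning c) := fun i hi ↦ by
    rcases a.nu_sign i with h | h
    · simpa [turning, posTurning, neg, h] using hi
    · simp only [turning, Finset.mem_filter_univ, h] at hi
      simp only [posTurning, neg, Finset.mem_union, Finset.mem_sdiff, Finset.mem_filter_univ, h]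
      push_cast at hi
      exact Or.inr ⟨trivial, by linarith⟩
  have hcard := (Finset.card_le_card hsub).trans (Finset.card_union_le _ _)
  have h1 := Finset.card_inter_add_card_sdiff (a.posTurning c) a.neg
  have h2 := Finset.card_inter_add_card_sdiff a.neg (a.posTurning c)
  rw [Finset.inter_comm] at h2
  omega

lemma exists_card_turning_add_two_le_of_nu_eq_neg_one {i : Fin n} (hi : a.ν i = -1) :
    ∃ c, (∀ l, a.g (a.θ l) ≠ c) ∧ (a.turning c).card + 2 ≤ a.mins.card + a.neg.card := by
  suffices ∃ c, (∀ l, a.g (a.θ l) ≠ c) ∧ i ∈ a.posTurning c ∧ (a.posTurning c).card = a.mins.card by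
    obtain ⟨c, hc, hmem, hcard⟩ := this
    have hpos : 0 < (a.posTurning c ∩ a.neg).card :=
      Finset.card_pos.2 ⟨i, Finset.mem_inter.2 ⟨hmem, by simpa [neg] using hi⟩⟩
    have := a.card_turning_add_two_mul_card_inter_le c
    exact ⟨c, hc, by omega⟩
  rcases (a.curv_ne_zero i).lt_or_gt with hmax | hmin
  · obtain ⟨M, hM⟩ := Finite.bddAbove_range fun l ↦ a.g (a.θ l)
    have hlt (l) : a.g (a.θ l) < M + 1 := (hM ⟨l, rfl⟩).trans_lt (lt_add_one M)
    have heq : a.posTurning (M + 1) = a.maxs := Finset.filter_congr fun l _ ↦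
      have hneg : a.g (a.θ l) - (M + 1) < 0 := sub_neg.2 (hlt l)
      ⟨fun h ↦ (neg_iff_neg_of_mul_pos h).2 hneg, fun h ↦ mul_pos_of_neg_of_neg h hneg⟩
    exact ⟨_, fun l ↦ (hlt l).ne, by simpa [heq, maxs] using hmax, by rw [heq, a.card_maxs]⟩
  · obtain ⟨M, hM⟩ := Finite.bddBelow_range fun l ↦ a.g (a.θ l)
    have hlt (l) : M - 1 < a.g (a.θ l) := (sub_one_lt M).trans_le (hM ⟨l, rfl⟩)
    have heq : a.posTurning (M - 1) = a.mins := Finset.filter_congr fun l _ ↦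
      mul_pos_iff_of_pos_right (sub_pos.2 (hlt l))
    exact ⟨_, fun l ↦ (hlt l).ne', by simpa [heq, mins] using hmin, by rw [heq]⟩

-- Just below the lowest maximum no maximum turns, and neither do the two adjacent minima.
lemma exists_card_turning_add_two_le (hn : 2 < n) :
    ∃ c, (∀ l, a.g (a.θ l) ≠ c) ∧ (a.turning c).card + 2 ≤ a.mins.card + a.neg.card := by
  have hne : a.maxs.Nonempty := Finset.card_pos.1 (a.card_maxs ▸ a.card_mins_pos)
  obtain ⟨m, hm, hlow⟩ := a.maxs.exists_min_image (fun i ↦ a.g (a.θ i)) hne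
  rw [maxs, Finset.mem_filter_univ] at hm
  obtain ⟨j, rfl⟩ := (finRotate n).surjective m
  set m := finRotate n j
  have hj : 0 < a.curv j := (a.curv_ne_zero j).lt_or_gt.resolve_left fun h ↦
    lt_asymm hm (curv_finRotate_pos h).1
  have hjm := (curv_finRotate_neg hj).2
  obtain ⟨hk, hkm⟩ := curv_finRotate_pos hm
  obtain ⟨c, ⟨hjkc, hcm⟩, hcne⟩ :=
    (Set.Ioo_infinite (max_lt hjm hkm)).exists_notMem_finite (Set.finite_range fun i ↦ a.g (a.θ i))
  obtain ⟨hjc, hkc⟩ := max_lt_iff.1 hjkc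
  have hsub : a.posTurning c ⊆ a.mins \ {j, finRotate n m} := fun l hl ↦ by
    rw [posTurning, Finset.mem_filter_univ] at hl
    have hl0 : 0 < a.curv l := (a.curv_ne_zero l).lt_or_gt.resolve_left fun h ↦
      hl.not_gt (mul_neg_of_neg_of_pos h (by linarith [hlow l (by simpa [maxs] using h)]))
    have hlc := (mul_pos_iff_of_pos_left hl0).1 hl
    simp only [Finset.mem_sdiff, mins, Finset.mem_filter_univ, Finset.mem_insert,
      Finset.mem_singleton]
    refine ⟨hl0, ?_⟩
    rintro (rfl | rfl) <;> linarith
  have hpair : {j, finRotate n m} ⊆ a.mins :=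
    Finset.insert_subset (by simpa [mins] using hj)
      (Finset.singleton_subset_iff.2 (by simpa [mins] using hk))
  have hcard := Finset.card_le_card hsub
  have htwo := Finset.card_pair (finRotate_finRotate_ne hn j).symm
  have hle := htwo.ge.trans (Finset.card_le_card hpair)
  rw [Finset.card_sdiff_of_subset hpair, htwo] at hcard
  have := a.card_turning_add_two_mul_card_inter_le c
  exact ⟨c, fun i h ↦ hcne ⟨i, h⟩, by omega⟩

lemma exists_isExtension_of_two (hn : n = 2) (hν : ∀ l, a.ν l = 1) :
    ∃ f, IsExtension a f ∧ critPts f = ∅ := by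
  subst hn
  obtain ⟨j, hj⟩ := Finset.card_pos.1 a.card_mins_pos
  rw [mins, Finset.mem_filter_univ] at hj
  exact exists_isExtension_critPts_eq_empty hj
    ((by decide : ∀ j : Fin 2, finRotate 2 (finRotate 2 j) = j) j)
    ((by decide : ∀ j l : Fin 2, l = finRotate 2 j ∨ l = j) j) hν

theorem exists_isExtension_encard_critPts_le_toNat : ∃ f, IsExtension a f ∧
    (critPts f).encard ≤ (((n : ℤ) - 1 - a.sigma / 2).toNat : ℕ) := by
  have hcount := a.card_mins_add_card_neg
  by_cases hc : ∃ c, (∀ l, a.g (a.θ l) ≠ c) ∧ (a.turning c).card + 2 ≤ a.mins.card + a.neg.card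
  · obtain ⟨c, hc, hcard⟩ := hc
    obtain ⟨f, hf, hle⟩ := exists_isExtension_encard_critPts_le hc
    have : 1 + (a.turning c).card ≤ ((n : ℤ) - 1 - a.sigma / 2).toNat := by omega
    exact ⟨f, hf, hle.trans (by exact_mod_cast this)⟩
  · have hn : n = 2 := by
      obtain ⟨m, rfl⟩ := a.n_even
      have := a.n_pos
      have := mt a.exists_card_turning_add_two_le hc
      omega
    obtain ⟨f, hf, hcrit⟩ := a.exists_isExtension_of_two hn fun l ↦
      (a.nu_sign l).resolve_right fun h ↦ hc (a.exists_card_turning_add_two_le_of_nu_eq_neg_one h)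
    exact ⟨f, hf, by simp [hcrit]⟩

end Ribbon

/-- Every extension of a ribbon `a` with `n` nodes and signature `σ` has at least
`1 − σ/2` critical points in the open unit disk, some extension has at most
`n − 1 − σ/2` critical points; consequently `1 − σ/2 ≤ γ(a) ≤ n − 1 − σ/2`. -/
theorem stmt_0 (n : ℕ) (a : Ribbon n) :
    (∀ f : E2 → ℝ, IsExtension a f →
      (((1 - a.sigma / 2).toNat : ℕ∞) ≤ (critPts f).encard)) ∧
    (∃ f : E2 → ℝ, IsExtension a f ∧
      (critPts f).encard ≤ ((((n : ℤ) - 1 - a.sigma / 2).toNat : ℕ) : ℕ∞)) ∧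
    (((1 - a.sigma / 2).toNat : ℕ∞) ≤ gammaR a ∧
      gammaR a ≤ ((((n : ℤ) - 1 - a.sigma / 2).toNat : ℕ) : ℕ∞)) := by
  have hlower (f : E2 → ℝ) (hf : IsExtension a f) := hf.toNat_le_encard_critPts
  obtain ⟨f, hf, hupper⟩ := a.exists_isExtension_encard_critPts_le_toNat
  have hgamma : gammaR a ≤ (critPts f).encard := sInf_le ⟨f, hf, rfl⟩
  refine ⟨hlower, ⟨f, hf, hupper⟩, le_sInf ?_, hgamma.trans hupper⟩
  rintro k ⟨f, hf, rfl⟩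
  exact hlower f hf
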